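/- Let 0 < s < 1 and let the collision kernel b satisfy b(cos θ)·θ^{2+2s} → K as θ → 0+ for some K > 0. Let α ∈ (2s, 2], let F₀ be a Borel probability measure on ℝ³ which is not a single Dirac mass (i.e. there is no v₀ ∈ ℝ³ with F₀({v₀}) = 1), whose characteristic function ψ₀ belongs to 𝒦^α, and let ψ be a solution of the Fourier-transformed (Bobylev) homogeneous Boltzmann Cauchy problem with initial datum ψ₀, with t ↦ ψ(t,·) continuous into 𝒦^α. Then there exists T > 0 such that for every t ∈ (0, T] and every N ∈ ℕ one has ∫_{ℝ³} (1+|ξ|²)^N |ψ(t,ξ)|² dξ < ∞ (i.e. the measure solution has a density lying in the Sobolev space H^∞(ℝ³) for every 0 < t ≤ T). -/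

import Mathlib

/-!
For a characteristic function `φ`, the defect `1 - ‖φ‖ ^ 2` is `∫ (1 - cos ⟪v, ξ⟫) dG` for the
symmetrized law `G`. Integrating it in `ξ⁻` against the singular part of the kernel, near
`σ = ξ / ‖ξ‖`, shows that the loss at frequency `ξ` is at least `κ * min (‖ξ‖ ^ 2) (‖ξ‖ ^ s)`;
continuity at time `0` makes `κ` uniform on a short interval because the initial law is not a Dirac
mass. Let `Λ` be the angular moment `∫ b (cos θ) * sin² θ dσ`.

If `Λ < ∞`, the modulus of the solution stays below the barrier `(1 + δ * ‖ξ‖ ^ 2) ^ (-c * τ)` up to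
a factor that is removed in the limit: at a first contact the gain exceeds the barrier by at most a
multiple of `Λ`, which together with the logarithmic time derivative of the barrier is beaten by the
loss. At time `t` the barrier decays to any prescribed order, since `c` is arbitrary.

If `Λ = ∞`, the equation is not needed: absolute convergence of the collision integral already
forces decay. It first makes the law `G` genuinely three-dimensional, so that the bound
`‖φ ξ‖ ^ 2 ≤ (1 + δ * ‖ξ‖ ^ 2) ^ (-k)` holds near the origin for small `δ`. At a violating frequency
of minimal norm, `ξ⁺` and `ξ⁻` obey the bound, hence `sin² θ` is at most a multiple of
`‖φ ξ⁺ * φ ξ⁻ - φ ξ‖`, which makes `Λ` finite.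
-/

noncomputable section

open MeasureTheory Real Filter Metric Set
open scoped RealInnerProductSpace Topology

/-- ℝ³ as a Euclidean space. -/
abbrev E3 : Type := EuclideanSpace ℝ (Fin 3)

/-- The surface measure on the unit sphere S² ⊂ ℝ³. -/
def sphμ : Measure (sphere (0 : E3) 1) := (volume : Measure E3).toSphere

/-- The characteristic function (Fourier transform) of a Borel measure on ℝ³,
`ψ(ξ) = ∫ e^{-i v·ξ} dΨ(v)`. -/
def charFn (Ψ : Measure E3) (ξ : E3) : ℂ :=
  ∫ v, Complex.exp (-(Complex.I * (⟪v, ξ⟫ : ℂ))) ∂Ψ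

/-- `ψ` is a characteristic function of some Borel probability measure on ℝ³. -/
def IsCharFn (ψ : E3 → ℂ) : Prop :=
  ∃ Ψ : Measure E3, IsProbabilityMeasure Ψ ∧ ψ = charFn Ψ

/-- Finiteness of `‖φ - 1‖_α`, i.e. the quantitative part of membership in `𝒦^α`. -/
def KBdd (α : ℝ) (φ : E3 → ℂ) : Prop :=
  ∃ C : ℝ, ∀ ξ : E3, ξ ≠ 0 → ‖φ ξ - 1‖ ≤ C * ‖ξ‖ ^ α

/-- Membership in the space `𝒦^α`. -/
def memK (α : ℝ) (φ : E3 → ℂ) : Prop := IsCharFn φ ∧ KBdd α φ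

/-- The distance `‖φ - φ'‖_α = sup_{ξ ≠ 0} |φ(ξ) - φ'(ξ)|/|ξ|^α` on `𝒦^α`. -/
def Kdist (α : ℝ) (φ φ' : E3 → ℂ) : ℝ :=
  ⨆ ξ : {ξ : E3 // ξ ≠ 0}, ‖φ ξ.1 - φ' ξ.1‖ / ‖(ξ.1 : E3)‖ ^ α

/-- `ξ⁺ = ξ/2 + (|ξ|/2)σ`. -/
def xiPlus (ξ : E3) (σ : sphere (0 : E3) 1) : E3 := (1/2 : ℝ) • ξ + (‖ξ‖ / 2) • (σ : E3)

/-- `ξ⁻ = ξ/2 - (|ξ|/2)σ`. -/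
def xiMinus (ξ : E3) (σ : sphere (0 : E3) 1) : E3 := (1/2 : ℝ) • ξ - (‖ξ‖ / 2) • (σ : E3)

/-- The Bobylev collision integrand at time `t`, frequency `ξ`, direction `σ`. -/
def bobylevIntegrand (b : ℝ → ℝ) (ψ : ℝ → E3 → ℂ) (t : ℝ) (ξ : E3)
    (σ : sphere (0 : E3) 1) : ℂ :=
  (b (⟪ξ, (σ : E3)⟫ / ‖ξ‖) : ℂ) *
    (ψ t (xiPlus ξ σ) * ψ t (xiMinus ξ σ) - ψ t ξ)

/-- `ψ : [0,∞) × ℝ³ → ℂ` is a solution of the Fourier-transformed (Bobylev)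
homogeneous Boltzmann Cauchy problem with collision kernel `b` and initial datum `ψ₀`. -/
structure IsBobylevSolution (b : ℝ → ℝ) (ψ : ℝ → E3 → ℂ) (ψ₀ : E3 → ℂ) : Prop where
  cont : ContinuousOn (fun p : ℝ × E3 => ψ p.1 p.2) (Set.Ici 0 ×ˢ Set.univ)
  init : ψ 0 = ψ₀
  isCharFn : ∀ t ≥ 0, IsCharFn (ψ t)
  integrable : ∀ t ≥ 0, ∀ ξ : E3, Integrable (bobylevIntegrand b ψ t ξ) sphμ
  eq : ∀ t ≥ 0, ∀ ξ : E3, HasDerivWithinAt (fun τ => ψ τ ξ)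
      (∫ σ, bobylevIntegrand b ψ t ξ σ ∂sphμ) (Set.Ici 0) t

/-- Continuity of `t ↦ ψ(t,·)` from `[0,∞)` into the metric space `(𝒦^α, ‖·‖_α)`. -/
def KContinuous (α : ℝ) (ψ : ℝ → E3 → ℂ) : Prop :=
  ∀ t₀ ∈ Set.Ici (0:ℝ), Tendsto (fun t => Kdist α (ψ t) (ψ t₀)) (𝓝[Set.Ici (0:ℝ)] t₀) (𝓝 0)

/-- The angular singularity assumption `b(cos θ) θ^{2+2s} → K` as `θ → 0+`. -/
def KernelSingular (b : ℝ → ℝ) (s K : ℝ) : Prop :=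
  Tendsto (fun θ : ℝ => b (Real.cos θ) * θ ^ (2 + 2*s)) (𝓝[>] 0) (𝓝 K)

section Trigonometry

lemma one_sub_cos_eq (x : ℝ) : 1 - cos x = 2 * sin (x / 2) ^ 2 := by
  rw [sin_sq_eq_half_sub, mul_div_cancel₀ x two_ne_zero]
  ring

lemma abs_sin_add_le (x y : ℝ) : |sin (x + y)| ≤ |sin x| + |sin y| :=
  calc |sin (x + y)| ≤ |sin x| * |cos y| + |cos x| * |sin y| := by
        rw [sin_add, ← abs_mul, ← abs_mul]
        exact abs_add_le _ _
    _ ≤ |sin x| * 1 + 1 * |sin y| := by gcongr <;> exact abs_cos_le_one _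
    _ = |sin x| + |sin y| := by ring

lemma one_sub_cos_add_le (x y : ℝ) :
    1 - cos (x + y) ≤ 2 * (1 - cos x) + 2 * (1 - cos y) := by
  have h := pow_le_pow_left₀ (abs_nonneg _) (abs_sin_add_le (x / 2) (y / 2)) 2
  rw [sq_abs, ← add_div] at h
  simp only [one_sub_cos_eq]
  nlinarith [sq_nonneg (|sin (x / 2)| - |sin (y / 2)|), sq_abs (sin (x / 2)), sq_abs (sin (y / 2))]

lemma sq_div_five_le_one_sub_cos {x : ℝ} (hx : |x| ≤ π) : x ^ 2 / 5 ≤ 1 - cos x := by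
  have h : x ^ 2 / 5 ≤ 2 / π ^ 2 * x ^ 2 := by
    have hπ : π ^ 2 ≤ 10 := by nlinarith [pi_lt_d2, pi_pos]
    rw [div_mul_eq_mul_div, div_le_div_iff₀ (by norm_num) (by positivity)]
    nlinarith [mul_le_mul_of_nonneg_left hπ (sq_nonneg x)]
  linarith [cos_le_one_sub_mul_cos_sq hx]

end Trigonometry

section LevyExponent

variable {E : Type*} [NormedAddCommGroup E] [InnerProductSpace ℝ E] [MeasurableSpace E]
  {G Ψ : Measure E}

/-- The real part of the Lévy exponent of a compound Poisson process with jump law `G`. For a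
characteristic function `φ` the function `1 - ‖φ‖ ^ 2` is of this form, with `G` the
symmetrization of the law of `φ`. -/
def levyExponent (G : Measure E) (ξ : E) : ℝ := ∫ v, (1 - cos ⟪v, ξ⟫) ∂G

/-- The law of `X - X'` for independent `X`, `X'` with law `Ψ`. -/
def symmetrization (Ψ : Measure E) : Measure E := Ψ ∗ Ψ.map (fun v ↦ (-1 : ℝ) • v)

lemma levyExponent_nonneg (ξ : E) : 0 ≤ levyExponent G ξ :=
  integral_nonneg fun _ ↦ sub_nonneg.2 (cos_le_one _)

@[simp]
lemma levyExponent_neg (ξ : E) : levyExponent G (-ξ) = levyExponent G ξ := by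
  simp [levyExponent]

section BorelSpace

variable [BorelSpace E]

lemma integrable_one_sub_cos_inner [IsFiniteMeasure G] (ξ : E) :
    Integrable (fun v ↦ 1 - cos ⟪v, ξ⟫) G :=
  .of_bound (C := 2) (by fun_prop) (ae_of_all _ fun v ↦ by
    rw [norm_eq_abs, abs_le]
    constructor <;> linarith [cos_le_one ⟪v, ξ⟫, neg_one_le_cos ⟪v, ξ⟫])

lemma levyExponent_eq_one_sub_re_charFun [IsProbabilityMeasure G] (ξ : E) :
    levyExponent G ξ = 1 - (charFun G ξ).re := by
  have hexp : Integrable (fun v : E ↦ Complex.exp (⟪v, ξ⟫ * Complex.I)) G :=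
    .of_bound (C := 1) (by fun_prop) (ae_of_all _ fun v ↦ by simp [Complex.norm_exp])
  have hcos : Integrable (fun v : E ↦ cos ⟪v, ξ⟫) G :=
    .of_bound (C := 1) (by fun_prop) (ae_of_all _ fun v ↦ abs_cos_le_one _)
  rw [levyExponent, integral_sub (integrable_const _) hcos, charFun_apply,
    ← RCLike.re_eq_complex_re, ← integral_re hexp]
  simp [Complex.exp_re]

instance [IsProbabilityMeasure Ψ] [SecondCountableTopology E] :
    IsProbabilityMeasure (symmetrization Ψ) := by
  have : IsProbabilityMeasure (Ψ.map fun v ↦ (-1 : ℝ) • v) :=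
    Measure.isProbabilityMeasure_map (by fun_prop)
  rw [symmetrization]
  infer_instance

lemma charFun_symmetrization [SecondCountableTopology E] [IsFiniteMeasure Ψ] (ξ : E) :
    charFun (symmetrization Ψ) ξ = ((‖charFun Ψ ξ‖ ^ 2 : ℝ) : ℂ) := by
  rw [symmetrization, charFun_conv, charFun_map_smul, neg_one_smul, charFun_neg, Complex.mul_conj,
    Complex.normSq_eq_norm_sq]

lemma levyExponent_symmetrization [SecondCountableTopology E] [IsProbabilityMeasure Ψ] (ξ : E) :
    levyExponent (symmetrization Ψ) ξ = 1 - ‖charFun Ψ ξ‖ ^ 2 := by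
  rw [levyExponent_eq_one_sub_re_charFun, charFun_symmetrization, Complex.ofReal_re]

lemma ae_eq_const_of_symmetrization_eq_dirac [SecondCountableTopology E] [IsProbabilityMeasure Ψ]
    (h : symmetrization Ψ = Measure.dirac 0) : ∃ v₀, ∀ᵐ v ∂Ψ, v = v₀ := by
  have hsum : ∀ᵐ z ∂Ψ.prod (Ψ.map fun v ↦ (-1 : ℝ) • v), z.1 + z.2 = 0 := by
    have h0 : ∀ᵐ v ∂symmetrization Ψ, v = 0 := by simp [h, ae_dirac_eq]
    exact ae_of_ae_map (by fun_prop) h0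
  obtain ⟨v₀, hv₀⟩ := (Measure.ae_ae_of_ae_prod hsum).exists
  refine ⟨v₀, (ae_of_ae_map (by fun_prop) hv₀).mono fun v hv ↦ ?_⟩
  rw [neg_one_smul, add_neg_eq_zero] at hv
  exact hv.symm

lemma exists_norm_charFun_ne_one [SecondCountableTopology E] [CompleteSpace E]
    [IsProbabilityMeasure Ψ] (h : ∀ v₀, Ψ {v₀} ≠ 1) : ∃ ξ, ‖charFun Ψ ξ‖ ≠ 1 := by
  by_contra! h1
  have hdirac : symmetrization Ψ = Measure.dirac 0 :=
    Measure.ext_of_charFun (funext fun ξ ↦ by simp [charFun_symmetrization, h1, charFun_dirac])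
  obtain ⟨v₀, hv₀⟩ := ae_eq_const_of_symmetrization_eq_dirac hdirac
  exact h v₀ ((prob_compl_eq_zero_iff (measurableSet_singleton v₀)).1 hv₀)

lemma levyExponent_le_sq_add_measureReal [IsProbabilityMeasure G] {m : ℝ} (ξ : E) :
    levyExponent G ξ ≤ (m * ‖ξ‖) ^ 2 / 2 + 2 * G.real {v | m ≤ ‖v‖} := by
  have hmeas : MeasurableSet {v : E | m ≤ ‖v‖} := measurableSet_le measurable_const measurable_norm
  have hint := (integrable_const (μ := G) (2 : ℝ)).indicator hmeas
  calc levyExponent G ξ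
      ≤ ∫ v, ((m * ‖ξ‖) ^ 2 / 2 + {v : E | m ≤ ‖v‖}.indicator (fun _ ↦ 2) v) ∂G := by
        refine integral_mono (integrable_one_sub_cos_inner ξ) ((integrable_const _).add hint) ?_
        intro v
        by_cases hv : m ≤ ‖v‖
        · simp only [indicator_of_mem (show v ∈ {v : E | m ≤ ‖v‖} from hv)]
          linarith [neg_one_le_cos ⟪v, ξ⟫, sq_nonneg (m * ‖ξ‖)]
        · have hinner : |⟪v, ξ⟫| ≤ m * ‖ξ‖ :=
            (abs_real_inner_le_norm _ _).trans (by gcongr; exact (not_le.1 hv).le)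
          simp only [indicator_of_notMem (show v ∉ {v : E | m ≤ ‖v‖} from hv), add_zero]
          linarith [one_sub_sq_div_two_le_cos (x := ⟪v, ξ⟫),
            sq_le_sq.2 (hinner.trans (le_abs_self _))]
    _ = (m * ‖ξ‖) ^ 2 / 2 + 2 * G.real {v | m ≤ ‖v‖} := by
        rw [integral_add (integrable_const _) hint, integral_indicator_const _ hmeas]
        simp [mul_comm]

end BorelSpace

end LevyExponent

section CharacteristicFunction

lemma charFn_eq_charFun_neg (Ψ : Measure E3) (ξ : E3) : charFn Ψ ξ = charFun Ψ (-ξ) := by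
  rw [charFn, charFun_apply]
  congr 1 with v
  rw [inner_neg_right]
  push_cast
  ring_nf

variable {φ : E3 → ℂ}

lemma IsCharFn.norm_le_one (hφ : IsCharFn φ) (ξ : E3) : ‖φ ξ‖ ≤ 1 := by
  obtain ⟨Ψ, _, rfl⟩ := hφ
  rw [charFn_eq_charFun_neg]
  exact norm_charFun_le_one _

lemma IsCharFn.exists_eq_levyExponent (hφ : IsCharFn φ) :
    ∃ G : Measure E3, IsProbabilityMeasure G ∧ ∀ ξ, 1 - ‖φ ξ‖ ^ 2 = levyExponent G ξ := by
  obtain ⟨Ψ, _, rfl⟩ := hφ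
  refine ⟨symmetrization Ψ, inferInstance, fun ξ ↦ ?_⟩
  rw [charFn_eq_charFun_neg, ← levyExponent_symmetrization, levyExponent_neg]

end CharacteristicFunction

section Sphere

section NormedSpace

variable {E : Type*} [NormedAddCommGroup E] [NormedSpace ℝ E]

/-- The action of a linear isometry on the unit sphere. -/
def sphereMap (R : E ≃ₗᵢ[ℝ] E) (σ : sphere (0 : E) 1) : sphere (0 : E) 1 := ⟨R σ, by simp⟩

@[simp]
lemma coe_sphereMap (R : E ≃ₗᵢ[ℝ] E) (σ : sphere (0 : E) 1) : (sphereMap R σ : E) = R σ := rfl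

@[fun_prop]
lemma continuous_sphereMap (R : E ≃ₗᵢ[ℝ] E) : Continuous (sphereMap R) := by
  unfold sphereMap
  fun_prop

lemma norm_normalize_sub_le {e : E} (he : ‖e‖ = 1) (x : E) {a : ℝ} (ha : 0 < a) :
    ‖NormedSpace.normalize x - e‖ ≤ 2 * ‖x - a • e‖ / a := by
  have hscale : ‖a⁻¹ • x - e‖ = ‖x - a • e‖ / a := by
    rw [← inv_smul_smul₀ ha.ne' e, ← smul_sub, norm_smul, norm_inv, norm_of_nonneg ha.le,
      inv_smul_smul₀ ha.ne', inv_mul_eq_div]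
  have hradial : ‖NormedSpace.normalize x - a⁻¹ • x‖ ≤ ‖x - a • e‖ / a := by
    rcases eq_or_ne x 0 with rfl | hx
    · simpa using by positivity
    · calc ‖NormedSpace.normalize x - a⁻¹ • x‖ = |a - ‖x‖| / a := by
            have hsub : NormedSpace.normalize x - a⁻¹ • x =
                ((a - ‖x‖) / a) • NormedSpace.normalize x := by
              rw [NormedSpace.normalize, smul_smul, ← sub_smul]
              congr 1
              field_simp [norm_ne_zero_iff.2 hx]
            rw [hsub, norm_smul, NormedSpace.norm_normalize hx, mul_one, norm_div,
              norm_of_nonneg ha.le, norm_eq_abs]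
        _ ≤ ‖x - a • e‖ / a := by
            gcongr
            simpa [norm_smul, he, abs_of_pos ha, abs_sub_comm] using abs_norm_sub_norm_le x (a • e)
  calc ‖NormedSpace.normalize x - e‖
      ≤ ‖NormedSpace.normalize x - a⁻¹ • x‖ + ‖a⁻¹ • x - e‖ := norm_sub_le_norm_sub_add_norm_sub ..
    _ ≤ 2 * ‖x - a • e‖ / a := by rw [hscale, mul_div_assoc]; linarith

open scoped Pointwise in
lemma ball_smul_subset_Ioo_smul_ball {e : E} (he : ‖e‖ = 1) {a r : ℝ} (hr : 0 < r) (hr1 : r ≤ 1)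
    (ha : 1 / 2 ≤ a) (ha1 : a + r / 8 ≤ 1) :
    ball (a • e) (r / 8) ⊆ Ioo (0 : ℝ) 1 • (ball e r ∩ sphere 0 1) := by
  intro x hx
  rw [mem_ball_iff_norm] at hx
  have hnorm := abs_le.1 (abs_norm_sub_norm_le x (a • e))
  rw [norm_smul, he, mul_one, norm_of_nonneg (by linarith)] at hnorm
  have hx0 : x ≠ 0 := norm_pos_iff.1 (by linarith)
  refine Set.mem_smul.2 ⟨‖x‖, ⟨norm_pos_iff.2 hx0, by linarith⟩, NormedSpace.normalize x, ⟨?_, ?_⟩,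
    NormedSpace.norm_smul_normalize x⟩
  · rw [mem_ball_iff_norm]
    refine (norm_normalize_sub_le he x (by linarith : 0 < a)).trans_lt ?_
    rw [div_lt_iff₀ (by linarith)]
    nlinarith
  · simp [NormedSpace.norm_normalize hx0]

variable [MeasurableSpace E] [BorelSpace E] {μ : Measure E}

open scoped Pointwise in
lemma measurePreserving_sphereMap {R : E ≃ₗᵢ[ℝ] E} (hR : MeasurePreserving R μ μ) :
    MeasurePreserving (sphereMap R) μ.toSphere μ.toSphere := by
  refine ⟨(continuous_sphereMap R).measurable, ?_⟩
  ext s hs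
  have hs' := (continuous_sphereMap R).measurable hs
  rw [Measure.map_apply (continuous_sphereMap R).measurable hs, Measure.toSphere_apply' _ hs,
    Measure.toSphere_apply' _ hs',
    ← hR.measure_preimage_emb R.toHomeomorph.measurableEmbedding
      (Ioo (0 : ℝ) 1 • (Subtype.val '' s))]
  congr 2
  ext x
  simp only [Set.mem_smul, mem_preimage]
  constructor
  · rintro ⟨a, ha, _, ⟨σ, hσ, rfl⟩, rfl⟩
    exact ⟨a, ha, _, ⟨_, hσ, rfl⟩, by simp⟩
  · rintro ⟨a, ha, _, ⟨σ, hσ, rfl⟩, hx⟩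
    have hσ' : sphereMap R (sphereMap R.symm σ) = σ := by ext1; simp
    refine ⟨a, ha, _, ⟨sphereMap R.symm σ, by rwa [mem_preimage, hσ'], rfl⟩, R.injective ?_⟩
    simpa using hx

variable [FiniteDimensional ℝ E] [μ.IsAddHaarMeasure]

/- The cone over the cap contains about `1 / r` disjoint balls of radius `r / 8` with centers on
the axis, which improves the exponent of `r` by one over that of a single ball. -/
open scoped Pointwise in
lemma ofReal_mul_addHaar_ball_le_toSphere_ball (e : sphere (0 : E) 1) {r : ℝ} (hr : 0 < r)
    (hr1 : r ≤ 1) :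
    ENNReal.ofReal (r⁻¹ * (r / 8) ^ Module.finrank ℝ E) * μ (ball 0 1) ≤ μ.toSphere (ball e r) := by
  have : Nontrivial E := ⟨⟨e, 0, ne_zero_of_mem_unit_sphere e⟩⟩
  have he : ‖(e : E)‖ = 1 := norm_eq_of_mem_sphere e
  set a : ℕ → ℝ := fun k ↦ 1 / 2 + k * (r / 4) with ha
  have hdisj : (↑(Finset.range ⌈r⁻¹⌉₊) : Set ℕ).PairwiseDisjoint
      fun k ↦ ball (a k • (e : E)) (r / 8) := by
    intro k _ l _ hkl
    refine ball_disjoint_ball ?_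
    have hone : (1 : ℝ) ≤ |(k : ℝ) - l| := by
      exact_mod_cast Int.one_le_abs (sub_ne_zero.2 (Nat.cast_injective.ne hkl))
    rw [dist_eq_norm, ← sub_smul, norm_smul, he, mul_one, norm_eq_abs,
      show a k - a l = (k - l) * (r / 4) by simp only [ha]; ring, abs_mul,
      abs_of_pos (show 0 < r / 4 by positivity)]
    nlinarith
  have hsub : ⋃ k ∈ Finset.range ⌈r⁻¹⌉₊, ball (a k • (e : E)) (r / 8) ⊆
      Ioo (0 : ℝ) 1 • ((↑) '' ball e r : Set E) := by
    refine iUnion₂_subset fun k hk ↦ ?_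
    have hk' : k * r < 1 := by
      rw [← lt_div_iff₀ hr, one_div]
      exact Nat.lt_ceil.1 (Finset.mem_range.1 hk)
    rw [Subtype.image_ball]
    exact ball_smul_subset_Ioo_smul_ball he hr hr1 (by simp only [ha]; nlinarith)
      (by simp only [ha]; nlinarith)
  calc ENNReal.ofReal (r⁻¹ * (r / 8) ^ Module.finrank ℝ E) * μ (ball 0 1)
      ≤ ⌈r⁻¹⌉₊ * (ENNReal.ofReal ((r / 8) ^ Module.finrank ℝ E) * μ (ball 0 1)) := by
        rw [ENNReal.ofReal_mul (by positivity), mul_assoc]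
        gcongr
        exact ENNReal.ofReal_le_of_le_toReal (by simpa using Nat.le_ceil r⁻¹)
    _ = μ (⋃ k ∈ Finset.range ⌈r⁻¹⌉₊, ball (a k • (e : E)) (r / 8)) := by
        rw [measure_biUnion_finset hdisj fun _ _ ↦ measurableSet_ball]
        simp [μ.addHaar_ball_of_pos _ (show 0 < r / 8 by positivity)]
    _ ≤ μ.toSphere (ball e r) := by
        rw [μ.toSphere_apply' measurableSet_ball]
        refine (measure_mono hsub).trans (le_mul_of_one_le_left' ?_)
        exact_mod_cast Module.finrank_pos (R := ℝ) (M := E)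

end NormedSpace

section InnerProductSpace

variable {E : Type*} [NormedAddCommGroup E] [InnerProductSpace ℝ E]

lemma exists_norm_eq_one_inner_eq_zero [FiniteDimensional ℝ E] (hE : 2 < Module.finrank ℝ E)
    (x y : E) : ∃ p : E, ‖p‖ = 1 ∧ ⟪x, p⟫ = 0 ∧ ⟪y, p⟫ = 0 := by
  let f : E →ₗ[ℝ] Fin 2 → ℝ := LinearMap.pi ![innerₛₗ ℝ x, innerₛₗ ℝ y]
  obtain ⟨q, hq, hq0⟩ := (Submodule.ne_bot_iff _).1
    (LinearMap.ker_ne_bot_of_finrank_lt (f := f) (by simpa using hE))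
  have hx : ⟪x, q⟫ = 0 := by simpa [f] using congrFun (LinearMap.mem_ker.1 hq) 0
  have hy : ⟪y, q⟫ = 0 := by simpa [f] using congrFun (LinearMap.mem_ker.1 hq) 1
  exact ⟨NormedSpace.normalize q, NormedSpace.norm_normalize hq0,
    by simp [NormedSpace.normalize, inner_smul_right, hx],
    by simp [NormedSpace.normalize, inner_smul_right, hy]⟩

end InnerProductSpace

end Sphere

section Oscillation

variable {E : Type*} [NormedAddCommGroup E] [InnerProductSpace ℝ E]

lemma sub_sq_div_five_le_one_sub_cos_add {x y : ℝ} (h : |x - y| ≤ π) :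
    (x - y) ^ 2 / 5 ≤ 2 * (1 - cos x) + 2 * (1 - cos y) := by
  have hcos := one_sub_cos_add_le x (-y)
  rw [← sub_eq_add_neg, cos_neg] at hcos
  linarith [sq_div_five_le_one_sub_cos h]

lemma reflection_orthogonal_span_singleton_apply {n : E} (hn : ‖n‖ = 1) (x : E) :
    (ℝ ∙ n)ᗮ.reflection x = x - (2 * ⟪n, x⟫) • n := by
  rw [Submodule.reflection_orthogonal_apply, Submodule.reflection_singleton_apply, hn]
  simp only [RCLike.ofReal_real_eq_id, id]
  module

lemma exists_norm_le_two_inner_mem_Icc {e : E} (he : ‖e‖ = 1) (w : E) :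
    ∃ m ∈ Submodule.span ℝ {e, w}, ‖m‖ ≤ 2 ∧ ⟪e, m⟫ ∈ Icc 1 2 ∧ |⟪w, m⟫| ∈ Icc ‖w‖ (2 * ‖w‖) := by
  wlog hw : 0 ≤ ⟪w, e⟫ generalizing w
  · obtain ⟨m, hm, hm2, hem, hwm⟩ := this (-w) (by rw [inner_neg_left]; linarith)
    refine ⟨m, ?_, hm2, hem, by simpa using hwm⟩
    rw [Submodule.mem_span_pair] at hm ⊢
    obtain ⟨a, c, rfl⟩ := hm
    exact ⟨a, -c, by simp⟩
  have hnorm : ‖NormedSpace.normalize w‖ ≤ 1 := by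
    rcases eq_or_ne w 0 with rfl | hw0
    · simp
    · exact (NormedSpace.norm_normalize hw0).le
  have hinner : ⟪e, NormedSpace.normalize w⟫ ∈ Icc 0 1 := by
    constructor
    · rw [NormedSpace.normalize, inner_smul_right, real_inner_comm]
      positivity
    · exact (real_inner_le_norm _ _).trans (by rwa [he, one_mul])
  have hww : ⟪w, NormedSpace.normalize w⟫ = ‖w‖ := by
    rw [NormedSpace.normalize, inner_smul_right, real_inner_self_eq_norm_sq]
    rcases eq_or_ne ‖w‖ 0 with h | h
    · simp [h]
    · field_simp
  have hwe : ⟪w, e⟫ ≤ ‖w‖ := by simpa [he] using real_inner_le_norm w e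
  refine ⟨e + NormedSpace.normalize w, ?_, ?_, ?_, ?_⟩
  · exact Submodule.mem_span_pair.2 ⟨1, ‖w‖⁻¹, by rw [one_smul, NormedSpace.normalize]⟩
  · linarith [norm_add_le e (NormedSpace.normalize w)]
  · rw [inner_add_right, real_inner_self_eq_norm_sq, he]
    constructor <;> linarith [hinner.1, hinner.2]
  · rw [inner_add_right, hww, abs_of_nonneg (by positivity)]
    constructor <;> linarith

variable [FiniteDimensional ℝ E]

lemma exists_norm_eq_one_inner_mem_Icc (hE : 2 < Module.finrank ℝ E) {e : E} (he : ‖e‖ = 1) (w : E)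
    {ρ : ℝ} (hρ : 0 ≤ ρ) (hρ2 : ρ ≤ 1 / 2) :
    ∃ n : E, ‖n‖ = 1 ∧ ⟪e, n⟫ ∈ Icc ρ (2 * ρ) ∧ |⟪w, n⟫| ∈ Icc (ρ * ‖w‖) (2 * ρ * ‖w‖) := by
  obtain ⟨m, hm, hm2, hem, hwm⟩ := exists_norm_le_two_inner_mem_Icc he w
  obtain ⟨p, hp, hep, hwp⟩ := exists_norm_eq_one_inner_eq_zero hE e w
  have hmp : ⟪m, p⟫ = 0 := by
    obtain ⟨a, c, rfl⟩ := Submodule.mem_span_pair.1 hm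
    simp [inner_add_left, inner_smul_left, hep, hwp]
  have hρm : ‖ρ • m‖ ^ 2 ≤ 1 := by
    rw [norm_smul, norm_of_nonneg hρ]
    exact pow_le_one₀ (by positivity) (by nlinarith)
  refine ⟨ρ • m + √(1 - ‖ρ • m‖ ^ 2) • p, ?_, ?_, ?_⟩
  · rw [← sq_eq_sq₀ (norm_nonneg _) zero_le_one, norm_add_sq_real, norm_smul (√_) p, mul_pow,
      norm_eq_abs (√_), sq_abs, sq_sqrt (sub_nonneg.2 hρm)]
    simp [inner_smul_left, inner_smul_right, hmp, hp]
  · simp only [inner_add_right, inner_smul_right, hep, mul_zero, add_zero, mem_Icc]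
    constructor <;> nlinarith [hem.1, hem.2]
  · simp only [inner_add_right, inner_smul_right, hwp, mul_zero, add_zero, abs_mul, mem_Icc,
      abs_of_nonneg hρ]
    constructor <;> nlinarith [hwm.1, hwm.2]

/- The reflection `R` along a well-chosen normal moves the cap of radius `ρ / 2` inside the cap of
radius `6 * ρ` and shifts the phase `⟪w, σ⟫` by about `ρ ^ 2 * ‖w‖`, so that the phases at `σ` and
`R σ` cannot both be small. -/
lemma exists_linearIsometryEquiv_mul_norm_sq_le (hE : 2 < Module.finrank ℝ E)
    (e : sphere (0 : E) 1) (w : E) {ρ : ℝ} (hρ : 0 < ρ) (hρ2 : ρ ≤ 1 / 2)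
    (hwρ : ‖w‖ * ρ ^ 2 ≤ 1 / 4) :
    ∃ R : E ≃ₗᵢ[ℝ] E, ∀ σ ∈ ball e (ρ / 2), sphereMap R σ ∈ ball e (6 * ρ) ∧
      ρ ^ 4 * ‖w‖ ^ 2 / 5 ≤
        2 * (1 - cos ⟪w, (e : E) - σ⟫) + 2 * (1 - cos ⟪w, (e : E) - sphereMap R σ⟫) := by
  obtain ⟨n, hn, hen, hwn⟩ := exists_norm_eq_one_inner_mem_Icc hE (norm_eq_of_mem_sphere e) w
    hρ.le hρ2
  refine ⟨(ℝ ∙ n)ᗮ.reflection, fun σ hσ ↦ ?_⟩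
  rw [mem_ball, Subtype.dist_eq, dist_eq_norm] at hσ
  have hnσ : |⟪n, (σ : E)⟫ - ⟪(e : E), n⟫| ≤ ρ / 2 := by
    rw [real_inner_comm n (e : E), ← inner_sub_right]
    exact (abs_real_inner_le_norm _ _).trans (by rw [hn, one_mul]; exact hσ.le)
  obtain ⟨hlow, hupp⟩ := abs_le.1 hnσ
  have hpos : 0 ≤ ⟪n, (σ : E)⟫ := by linarith [hen.1]
  constructor
  · rw [mem_ball, Subtype.dist_eq, dist_eq_norm, coe_sphereMap,
      reflection_orthogonal_span_singleton_apply hn, sub_right_comm]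
    refine (norm_sub_le _ _).trans_lt ?_
    rw [norm_smul, hn, mul_one, norm_of_nonneg (by positivity)]
    linarith [hen.2]
  · set y := 2 * ⟪n, (σ : E)⟫ * ⟪w, n⟫ with hy
    have hyabs : |y| = 2 * ⟪n, (σ : E)⟫ * |⟪w, n⟫| := by
      rw [hy, abs_mul, abs_of_nonneg (by positivity)]
    have hylow : ρ ^ 2 * ‖w‖ ≤ |y| := by
      rw [hyabs, sq, mul_assoc]
      exact mul_le_mul (by linarith [hen.1]) hwn.1 (by positivity) (by positivity)
    have hyupp : |y| ≤ π := by
      calc |y| ≤ 5 * ρ * (2 * ρ * ‖w‖) := by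
            rw [hyabs]
            exact mul_le_mul (by linarith [hen.2]) hwn.2 (abs_nonneg _) (by positivity)
        _ ≤ π := by linarith [pi_gt_three]
    have hsub : y = ⟪w, (e : E) - sphereMap (ℝ ∙ n)ᗮ.reflection σ⟫ - ⟪w, (e : E) - σ⟫ := by
      rw [hy, coe_sphereMap, reflection_orthogonal_span_singleton_apply hn]
      simp only [inner_sub_right, inner_smul_right]
      ring
    calc ρ ^ 4 * ‖w‖ ^ 2 / 5 = (ρ ^ 2 * ‖w‖) ^ 2 / 5 := by ring
      _ ≤ y ^ 2 / 5 := by rw [← sq_abs y]; gcongr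
      _ ≤ _ := by
          rw [hsub, add_comm]
          exact sub_sq_div_five_le_one_sub_cos_add (hsub ▸ hyupp)

variable [MeasurableSpace E] [BorelSpace E]

lemma ofReal_mul_toSphere_ball_le_setLIntegral (hE : 2 < Module.finrank ℝ E)
    (e : sphere (0 : E) 1) (w : E) {ρ : ℝ} (hρ : 0 < ρ) (hρ2 : ρ ≤ 1 / 2)
    (hwρ : ‖w‖ * ρ ^ 2 ≤ 1 / 4) :
    ENNReal.ofReal (ρ ^ 4 * ‖w‖ ^ 2 / 20) * (volume : Measure E).toSphere (ball e (ρ / 2)) ≤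
      ∫⁻ σ in ball e (6 * ρ), ENNReal.ofReal (1 - cos ⟪w, (e : E) - σ⟫)
        ∂(volume : Measure E).toSphere := by
  obtain ⟨R, hR⟩ := exists_linearIsometryEquiv_mul_norm_sq_le hE e w hρ hρ2 hwρ
  set g : sphere (0 : E) 1 → ENNReal :=
    (ball e (6 * ρ)).indicator fun σ ↦ ENNReal.ofReal (1 - cos ⟪w, (e : E) - σ⟫) with hg
  have hgm : Measurable g := .indicator (by fun_prop) measurableSet_ball
  have hpt : ∀ σ ∈ ball e (ρ / 2),
      4 * ENNReal.ofReal (ρ ^ 4 * ‖w‖ ^ 2 / 20) ≤ 2 * g σ + 2 * g (sphereMap R σ) := by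
    intro σ hσ
    rw [hg, indicator_of_mem (ball_subset_ball (by linarith) hσ), indicator_of_mem (hR σ hσ).1]
    simp only [← ENNReal.ofReal_ofNat]
    rw [← ENNReal.ofReal_mul (by norm_num), ← ENNReal.ofReal_mul (by norm_num),
      ← ENNReal.ofReal_mul (by norm_num), ← ENNReal.ofReal_add (by simpa using cos_le_one _)
      (by simpa using cos_le_one _)]
    exact ENNReal.ofReal_le_ofReal (by linarith [(hR σ hσ).2])
  rw [← lintegral_indicator measurableSet_ball,
    ← ENNReal.mul_le_mul_iff_right (a := 4) (by norm_num) (by norm_num), ← mul_assoc,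
    ← setLIntegral_const]
  calc ∫⁻ _ in ball e (ρ / 2), 4 * ENNReal.ofReal (ρ ^ 4 * ‖w‖ ^ 2 / 20)
        ∂(volume : Measure E).toSphere
      ≤ ∫⁻ σ in ball e (ρ / 2), (2 * g σ + 2 * g (sphereMap R σ)) ∂(volume : Measure E).toSphere :=
        setLIntegral_mono' measurableSet_ball hpt
    _ ≤ ∫⁻ σ, (2 * g σ + 2 * g (sphereMap R σ)) ∂(volume : Measure E).toSphere :=
        setLIntegral_le_lintegral _ _
    _ = 4 * ∫⁻ σ, g σ ∂(volume : Measure E).toSphere := by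
        rw [lintegral_add_left (hgm.const_mul _), lintegral_const_mul _ hgm,
          lintegral_const_mul _ (by fun_prop),
          (measurePreserving_sphereMap R.measurePreserving).lintegral_comp hgm, ← add_mul]
        norm_num

end Oscillation

section Coercivity

lemma angle_le_two_mul_norm_sub {E : Type*} [NormedAddCommGroup E] [InnerProductSpace ℝ E] {x y : E}
    (hx : ‖x‖ = 1) (hy : ‖y‖ = 1) : InnerProductGeometry.angle x y ≤ 2 * ‖x - y‖ := by
  have hcos : ‖x - y‖ ^ 2 = 2 * (1 - cos (InnerProductGeometry.angle x y)) := by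
    rw [InnerProductGeometry.cos_angle, norm_sub_sq_real, hx, hy]
    ring
  have hle := sq_div_five_le_one_sub_cos (x := InnerProductGeometry.angle x y)
    (by rw [abs_of_nonneg (InnerProductGeometry.angle_nonneg _ _)]
        exact InnerProductGeometry.angle_le_pi _ _)
  refine le_of_sq_le_sq ?_ (by positivity)
  nlinarith [sq_nonneg ‖x - y‖]

lemma exists_mul_rpow_le_kernel {E : Type*} [NormedAddCommGroup E] [InnerProductSpace ℝ E]
    {b : ℝ → ℝ} {c q : ℝ} (hc : 0 < c) (hq : 0 ≤ q)
    (hb : ∀ᶠ θ in 𝓝[>] 0, c ≤ b (cos θ) * θ ^ q) :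
    ∃ c' > 0, ∃ r ∈ Ioc 0 1, ∀ e σ : E, ‖e‖ = 1 → ‖σ‖ = 1 → σ ≠ e →
      ∀ ρ ≤ r, ‖σ - e‖ < ρ → c' * ρ ^ (-q) ≤ b ⟪e, σ⟫ := by
  rw [eventually_nhdsWithin_iff, Metric.eventually_nhds_iff] at hb
  obtain ⟨θ₀, hθ₀, hb⟩ := hb
  refine ⟨c * 2 ^ (-q), by positivity, min 1 (θ₀ / 2), ⟨by positivity, min_le_left _ _⟩,
    fun e σ he hσ hne ρ hρr hρ ↦ ?_⟩
  have hρpos : 0 < ρ := (norm_nonneg _).trans_lt hρ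
  set θ := InnerProductGeometry.angle e σ
  have hθcos : cos θ = ⟪e, σ⟫ := by rw [InnerProductGeometry.cos_angle, he, hσ, one_mul, div_one]
  have hθlt : θ < 2 * ρ := by
    linarith [angle_le_two_mul_norm_sub he hσ, norm_sub_rev e σ]
  have hθpos : 0 < θ := by
    refine (InnerProductGeometry.angle_nonneg e σ).lt_of_ne' fun (h0 : θ = 0) ↦ hne ?_
    exact ((inner_eq_one_iff_of_norm_eq_one he hσ).1 (hθcos.symm.trans (by rw [h0, cos_zero]))).symm
  have hbθ := hb (y := θ) (by
    rw [dist_zero_right, norm_of_nonneg hθpos.le]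
    linarith [hρr.trans (min_le_right _ _)]) hθpos
  calc c * 2 ^ (-q) * ρ ^ (-q) = c * (2 * ρ) ^ (-q) := by
        rw [mul_rpow two_pos.le hρpos.le, mul_assoc]
    _ ≤ c * θ ^ (-q) := by
        gcongr c * ?_
        exact rpow_le_rpow_of_nonpos hθpos hθlt.le (by linarith)
    _ ≤ b ⟪e, σ⟫ := by
        rw [rpow_neg hθpos.le, ← div_eq_mul_inv, div_le_iff₀ (by positivity), ← hθcos]
        exact hbθ

instance : IsFiniteMeasure sphμ := by
  rw [sphμ]
  infer_instance

lemma exists_mul_sq_le_sphμ_ball :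
    ∃ a > 0, ∀ (e : sphere (0 : E3) 1), ∀ r ∈ Ioc (0 : ℝ) 1,
      ENNReal.ofReal (a * r ^ 2) ≤ sphμ (ball e r) := by
  refine ⟨volume.real (ball (0 : E3) 1) / 8 ^ 3,
    div_pos (ENNReal.toReal_pos (measure_ball_pos _ _ one_pos).ne' measure_ball_lt_top.ne)
      (by norm_num), fun e r hr ↦ ?_⟩
  refine le_trans (le_of_eq ?_) (ofReal_mul_addHaar_ball_le_toSphere_ball e hr.1 hr.2)
  rw [← ofReal_measureReal (μ := volume) (s := ball (0 : E3) 1),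
    ← ENNReal.ofReal_mul (by have := hr.1; positivity), finrank_euclideanSpace_fin]
  congr 1
  field_simp [hr.1.ne']

section

variable {b : ℝ → ℝ} {c s : ℝ}

/- The radius `ρ ∼ ‖w‖ ^ (-1 / 2)` is the scale at which the phase shift `ρ ^ 2 * ‖w‖` of
`exists_linearIsometryEquiv_mul_norm_sq_le` is of order one. -/
lemma min_sq_rpow_le_rpow_mul_sq {x : ℝ} (hx : 0 ≤ x) (s : ℝ) :
    min (x ^ 2) (x ^ s) ≤ (√(max 1 x))⁻¹ ^ (4 - 2 * s) * x ^ 2 := by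
  rcases le_total x 1 with h | h
  · simp [max_eq_left h]
  · have hx0 : 0 < x := by linarith
    refine (min_le_right _ _).trans (le_of_eq ?_)
    rw [max_eq_right h, sqrt_eq_rpow, ← rpow_neg hx, ← rpow_mul hx, ← rpow_natCast x 2,
      ← rpow_add hx0]
    congr 1
    push_cast
    ring

lemma exists_mul_setLIntegral_one_sub_cos_le {q : ℝ} (hc : 0 < c) (hq : 0 ≤ q)
    (hb : ∀ᶠ θ in 𝓝[>] 0, c ≤ b (cos θ) * θ ^ q) :
    ∃ c' > 0, ∃ r ∈ Ioc (0 : ℝ) 1, ∀ (e : sphere (0 : E3) 1) (w : E3), ∀ ρ ∈ Ioc 0 r,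
      ENNReal.ofReal (c' * ρ ^ (-q)) *
          ∫⁻ σ in ball e ρ, ENNReal.ofReal (1 - cos ⟪w, (e : E3) - σ⟫) ∂sphμ ≤
        ∫⁻ σ in ball e 1, ENNReal.ofReal (b ⟪(e : E3), σ⟫ * (1 - cos ⟪w, (e : E3) - σ⟫))
          ∂sphμ := by
  obtain ⟨c', hc', r, hr, hker⟩ := exists_mul_rpow_le_kernel (E := E3) hc hq hb
  refine ⟨c', hc', r, hr, fun e w ρ ⟨hρ, hρr⟩ ↦ ?_⟩
  have hkerρ : ∀ σ ∈ ball e ρ, c' * ρ ^ (-q) * (1 - cos ⟪w, (e : E3) - σ⟫) ≤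
      b ⟪(e : E3), σ⟫ * (1 - cos ⟪w, (e : E3) - σ⟫) := by
    intro σ hσ
    rw [mem_ball, Subtype.dist_eq, dist_eq_norm] at hσ
    rcases eq_or_ne (σ : E3) e with h | h
    · simp [h]
    · refine mul_le_mul_of_nonneg_right ?_ (sub_nonneg.2 (cos_le_one _))
      exact hker e σ (norm_eq_of_mem_sphere e) (norm_eq_of_mem_sphere σ) h _ hρr hσ
  calc _ ≤ ∫⁻ σ in ball e ρ,
          ENNReal.ofReal (b ⟪(e : E3), σ⟫ * (1 - cos ⟪w, (e : E3) - σ⟫)) ∂sphμ := by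
        rw [← lintegral_const_mul _ (by fun_prop)]
        refine setLIntegral_mono' measurableSet_ball fun σ hσ ↦ ?_
        rw [← ENNReal.ofReal_mul (by positivity)]
        exact ENNReal.ofReal_le_ofReal (hkerρ σ hσ)
    _ ≤ _ := lintegral_mono_set (ball_subset_ball (hρr.trans hr.2))

lemma exists_ofReal_mul_rpow_le_setLIntegral (hs : 0 < s) (hc : 0 < c)
    (hb : ∀ᶠ θ in 𝓝[>] 0, c ≤ b (cos θ) * θ ^ (2 + 2 * s)) :
    ∃ κ > 0, ∃ ρ₀ ∈ Ioc (0 : ℝ) (1 / 6), ∀ (e : sphere (0 : E3) 1) (w : E3),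
      ∀ ρ ∈ Ioc 0 ρ₀, ‖w‖ * ρ ^ 2 ≤ 1 / 4 →
        ENNReal.ofReal (κ * (ρ ^ (4 - 2 * s) * ‖w‖ ^ 2)) ≤
          ∫⁻ σ in ball e 1, ENNReal.ofReal (b ⟪(e : E3), σ⟫ * (1 - cos ⟪w, (e : E3) - σ⟫))
            ∂sphμ := by
  obtain ⟨c', hc', r, hr, hker⟩ :=
    exists_mul_setLIntegral_one_sub_cos_le hc (by linarith) hb
  obtain ⟨a, ha, hcap⟩ := exists_mul_sq_le_sphμ_ball
  refine ⟨c' * 6 ^ (-(2 + 2 * s)) * (a / 80), by positivity, r / 6,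
    ⟨by linarith [hr.1], by linarith [hr.2]⟩, fun e w ρ ⟨hρ, hρr⟩ hwρ ↦ ?_⟩
  have hρ6 : ρ ≤ 1 / 6 := by linarith [hr.2]
  have hpow : ρ ^ (4 - 2 * s) = ρ ^ (-(2 + 2 * s)) * ρ ^ 6 := by
    rw [← rpow_natCast, ← rpow_add hρ]
    congr 1
    push_cast
    ring
  calc ENNReal.ofReal (c' * 6 ^ (-(2 + 2 * s)) * (a / 80) * (ρ ^ (4 - 2 * s) * ‖w‖ ^ 2))
      = ENNReal.ofReal (c' * (6 * ρ) ^ (-(2 + 2 * s))) *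
          (ENNReal.ofReal (ρ ^ 4 * ‖w‖ ^ 2 / 20) * ENNReal.ofReal (a * (ρ / 2) ^ 2)) := by
        rw [hpow, ← ENNReal.ofReal_mul (by positivity), ← ENNReal.ofReal_mul (by positivity),
          mul_rpow (by norm_num) hρ.le]
        ring_nf
    _ ≤ ENNReal.ofReal (c' * (6 * ρ) ^ (-(2 + 2 * s))) *
          ∫⁻ σ in ball e (6 * ρ), ENNReal.ofReal (1 - cos ⟪w, (e : E3) - σ⟫) ∂sphμ := by
        gcongr
        refine le_trans ?_ (ofReal_mul_toSphere_ball_le_setLIntegral (by simp) e w hρ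
          (by linarith) hwρ)
        gcongr
        exact hcap e _ ⟨by positivity, by linarith⟩
    _ ≤ _ := hker e w (6 * ρ) ⟨by positivity, by linarith⟩

lemma exists_ofReal_mul_min_le_setLIntegral_one_sub_cos (hs : 0 < s) (hc : 0 < c)
    (hb : ∀ᶠ θ in 𝓝[>] 0, c ≤ b (cos θ) * θ ^ (2 + 2 * s)) :
    ∃ κ > 0, ∀ (e : sphere (0 : E3) 1) (w : E3),
      ENNReal.ofReal (κ * min (‖w‖ ^ 2) (‖w‖ ^ s)) ≤
        ∫⁻ σ in ball e 1, ENNReal.ofReal (b ⟪(e : E3), σ⟫ * (1 - cos ⟪w, (e : E3) - σ⟫)) ∂sphμ := by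
  obtain ⟨κ, hκ, ρ₀, hρ₀, hle⟩ := exists_ofReal_mul_rpow_le_setLIntegral hs hc hb
  have hρ₀pos := hρ₀.1
  refine ⟨κ * ρ₀ ^ (4 - 2 * s), by positivity, fun e w ↦ ?_⟩
  have hM : (√(max 1 ‖w‖))⁻¹ ≤ 1 := inv_le_one_of_one_le₀ (by simp)
  refine le_trans (ENNReal.ofReal_le_ofReal ?_) (hle e w (ρ₀ * (√(max 1 ‖w‖))⁻¹)
    ⟨by positivity, mul_le_of_le_one_right hρ₀pos.le hM⟩ ?_)
  · rw [mul_assoc, mul_rpow hρ₀pos.le (by positivity), mul_assoc]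
    gcongr
    exact min_sq_rpow_le_rpow_mul_sq (norm_nonneg w) s
  · have hsq : ρ₀ ^ 2 ≤ 1 / 4 := by nlinarith [hρ₀.2]
    rw [mul_pow, inv_pow, sq_sqrt (by positivity), ← div_eq_mul_inv, ← mul_div_assoc,
      div_le_iff₀ (by positivity), mul_comm ‖w‖]
    gcongr
    exact le_max_right _ _

end

end Coercivity

section CollisionGeometry

/-- The cosine of the deviation angle between `ξ` and `σ`, the argument of the collision kernel. -/
def devCos (ξ : E3) (σ : sphere (0 : E3) 1) : ℝ := ⟪ξ, (σ : E3)⟫ / ‖ξ‖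

@[fun_prop]
lemma continuous_devCos (ξ : E3) : Continuous (devCos ξ) := by
  unfold devCos
  fun_prop

lemma norm_mul_devCos (ξ : E3) (σ : sphere (0 : E3) 1) : ‖ξ‖ * devCos ξ σ = ⟪ξ, (σ : E3)⟫ := by
  rcases eq_or_ne ξ 0 with rfl | h
  · simp
  · rw [devCos, mul_div_cancel₀ _ (norm_ne_zero_iff.2 h)]

lemma abs_devCos_le_one (ξ : E3) (σ : sphere (0 : E3) 1) : |devCos ξ σ| ≤ 1 := by
  simpa [devCos] using abs_real_inner_div_norm_mul_norm_le_one ξ (σ : E3)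

lemma one_sub_devCos_sq_nonneg (ξ : E3) (σ : sphere (0 : E3) 1) : 0 ≤ 1 - devCos ξ σ ^ 2 :=
  sub_nonneg.2 ((sq_le_one_iff_abs_le_one _).2 (abs_devCos_le_one ξ σ))

lemma devCos_neg (ξ : E3) (σ : sphere (0 : E3) 1) : devCos ξ (-σ) = -devCos ξ σ := by
  simp [devCos, neg_div]

lemma devCos_smul {a : ℝ} (ha : 0 < a) (ξ : E3) : devCos (a • ξ) = devCos ξ := by
  funext σ
  rw [devCos, devCos, real_inner_smul_left, norm_smul, norm_of_nonneg ha.le,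
    mul_div_mul_left _ _ ha.ne']

lemma devCos_map_sphereMap (R : E3 ≃ₗᵢ[ℝ] E3) (ξ : E3) (σ : sphere (0 : E3) 1) :
    devCos (R ξ) (sphereMap R σ) = devCos ξ σ := by
  rw [devCos, devCos, coe_sphereMap, R.inner_map_map, R.norm_map]

lemma xiPlus_neg (ξ : E3) (σ : sphere (0 : E3) 1) : xiPlus ξ (-σ) = xiMinus ξ σ := by
  simp [xiPlus, xiMinus, sub_eq_add_neg]

lemma norm_xiPlus_sq (ξ : E3) (σ : sphere (0 : E3) 1) :
    ‖xiPlus ξ σ‖ ^ 2 = ‖ξ‖ ^ 2 * ((1 + devCos ξ σ) / 2) := by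
  rw [xiPlus, norm_add_sq_real, norm_smul, norm_smul, real_inner_smul_left, real_inner_smul_right,
    ← norm_mul_devCos, norm_eq_of_mem_sphere σ, norm_of_nonneg (by positivity : 0 ≤ ‖ξ‖ / 2),
    norm_of_nonneg (by norm_num : (0 : ℝ) ≤ 1 / 2)]
  ring

lemma norm_xiMinus_sq (ξ : E3) (σ : sphere (0 : E3) 1) :
    ‖xiMinus ξ σ‖ ^ 2 = ‖ξ‖ ^ 2 * ((1 - devCos ξ σ) / 2) := by
  rw [← xiPlus_neg, norm_xiPlus_sq, devCos_neg, sub_eq_add_neg]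

lemma exists_sphere_eq_norm_smul {ξ : E3} (hξ : ξ ≠ 0) :
    ∃ e : sphere (0 : E3) 1, ξ = ‖ξ‖ • (e : E3) :=
  ⟨⟨‖ξ‖⁻¹ • ξ, by simp [norm_smul, hξ]⟩, by simp [smul_smul, hξ]⟩

lemma devCos_eq_inner {ξ : E3} (hξ : ξ ≠ 0) {e : sphere (0 : E3) 1} (hξe : ξ = ‖ξ‖ • (e : E3))
    (σ : sphere (0 : E3) 1) : devCos ξ σ = ⟪(e : E3), σ⟫ := by
  rw [devCos, hξe, real_inner_smul_left, ← hξe, mul_div_cancel_left₀ _ (norm_ne_zero_iff.2 hξ)]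

lemma xiMinus_eq_smul_sub {ξ : E3} {e : sphere (0 : E3) 1} (hξe : ξ = ‖ξ‖ • (e : E3))
    (σ : sphere (0 : E3) 1) : xiMinus ξ σ = (‖ξ‖ / 2) • ((e : E3) - σ) := by
  rw [xiMinus, smul_sub, show (‖ξ‖ / 2) • (e : E3) = (1 / 2 : ℝ) • ‖ξ‖ • (e : E3) by module, ← hξe]

lemma ball_one_subset_devCos_nonneg {ξ : E3} (hξ : ξ ≠ 0) {e : sphere (0 : E3) 1}
    (hξe : ξ = ‖ξ‖ • (e : E3)) : ball e 1 ⊆ {σ | 0 ≤ devCos ξ σ} := by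
  intro σ hσ
  have hdist : ‖(σ : E3) - e‖ < 1 := by simpa [Subtype.dist_eq, dist_eq_norm] using hσ
  have hsq := norm_sub_sq_real (σ : E3) e
  rw [norm_eq_of_mem_sphere, norm_eq_of_mem_sphere, real_inner_comm,
    ← devCos_eq_inner hξ hξe] at hsq
  rw [mem_ofPred_eq]
  nlinarith [norm_nonneg ((σ : E3) - e)]

lemma measurePreserving_sphereMap_sphμ (R : E3 ≃ₗᵢ[ℝ] E3) :
    MeasurePreserving (sphereMap R) sphμ sphμ :=
  measurePreserving_sphereMap R.measurePreserving

/-- The angular momentum-transfer moment `∫ b (cos θ) sin² θ dσ` of the kernel, as seen from the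
frequency `ξ`. -/
def angularMoment (b : ℝ → ℝ) (ξ : E3) : ENNReal :=
  ∫⁻ σ, ENNReal.ofReal (b (devCos ξ σ) * (1 - devCos ξ σ ^ 2)) ∂sphμ

lemma angularMoment_map {b : ℝ → ℝ} (hb : Measurable b) (R : E3 ≃ₗᵢ[ℝ] E3) (ξ : E3) :
    angularMoment b (R ξ) = angularMoment b ξ := by
  rw [angularMoment, ← (measurePreserving_sphereMap_sphμ R).lintegral_comp (by fun_prop)]
  simp only [devCos_map_sphereMap, angularMoment]

lemma angularMoment_eq {b : ℝ → ℝ} (hb : Measurable b) {ξ η : E3} (hξ : ξ ≠ 0) (hη : η ≠ 0) :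
    angularMoment b ξ = angularMoment b η := by
  have hpos : 0 < ‖ξ‖ / ‖η‖ := div_pos (norm_pos_iff.2 hξ) (norm_pos_iff.2 hη)
  have hnorm : ‖ξ‖ = ‖(‖ξ‖ / ‖η‖) • η‖ := by
    rw [norm_smul, norm_of_nonneg hpos.le, div_mul_cancel₀ _ (norm_ne_zero_iff.2 hη)]
  rw [← angularMoment_map hb _ ξ, Submodule.reflection_sub hnorm, angularMoment, angularMoment,
    devCos_smul hpos]

end CollisionGeometry

section CollisionCoercivity

/-- Coercivity of the collision operator at `φ`, with constant `κ` and order `s` at high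
frequencies. Only the hemisphere `θ ≤ π / 2`, where the kernel is singular, is used. -/
def IsCollisionCoercive (b : ℝ → ℝ) (κ s : ℝ) (φ : E3 → ℂ) : Prop :=
  ∀ ξ ≠ 0, ENNReal.ofReal (κ * min (‖ξ‖ ^ 2) (‖ξ‖ ^ s)) ≤
    ∫⁻ σ in {σ | 0 ≤ devCos ξ σ},
      ENNReal.ofReal (b (devCos ξ σ) * (1 - ‖φ (xiMinus ξ σ)‖ ^ 2)) ∂sphμ

lemma lintegral_ofReal_mul_one_sub_cos_inner {E : Type*} [NormedAddCommGroup E]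
    [InnerProductSpace ℝ E] [MeasurableSpace E] [BorelSpace E] {G : Measure E} [IsFiniteMeasure G]
    {a : ℝ} (ha : 0 ≤ a) (ξ : E) :
    ∫⁻ v, ENNReal.ofReal (a * (1 - cos ⟪v, ξ⟫)) ∂G = ENNReal.ofReal (a * levyExponent G ξ) := by
  rw [levyExponent, ← integral_const_mul, ofReal_integral_eq_lintegral_ofReal
    ((integrable_one_sub_cos_inner ξ).const_mul a)
    (ae_of_all _ fun v ↦ mul_nonneg ha (sub_nonneg.2 (cos_le_one _)))]

lemma sq_mul_min_sq_rpow_le {m x y s : ℝ} (hm : m ∈ Icc 0 1) (hx : 0 ≤ x) (hxy : m * x ≤ y)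
    (hs : s ∈ Icc 0 2) : m ^ 2 * min (x ^ 2) (x ^ s) ≤ min (y ^ 2) (y ^ s) := by
  have hmx : 0 ≤ m * x := mul_nonneg hm.1 hx
  refine le_min ?_ ?_
  · calc m ^ 2 * min (x ^ 2) (x ^ s) ≤ m ^ 2 * x ^ 2 := by gcongr; exact min_le_left _ _
      _ = (m * x) ^ 2 := by ring
      _ ≤ y ^ 2 := by gcongr
  · calc m ^ 2 * min (x ^ 2) (x ^ s) ≤ m ^ (2 : ℝ) * x ^ s := by
          rw [rpow_two]; gcongr; exact min_le_right _ _
      _ ≤ m ^ s * x ^ s :=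
          mul_le_mul_of_nonneg_right (rpow_le_rpow_of_exponent_ge' hm.1 hm.2 hs.1 hs.2)
            (rpow_nonneg hx s)
      _ = (m * x) ^ s := (mul_rpow hm.1 hx).symm
      _ ≤ y ^ s := rpow_le_rpow hmx hxy hs.1

lemma ofReal_mul_measure_le_setLIntegral_levyExponent {b : ℝ → ℝ} (hb_meas : Measurable b)
    (hb_nonneg : ∀ x, 0 ≤ b x) {κ s : ℝ} (hκ : 0 ≤ κ) (hs : s ∈ Icc 0 2)
    {e : sphere (0 : E3) 1}
    (h : ∀ w, ENNReal.ofReal (κ * min (‖w‖ ^ 2) (‖w‖ ^ s)) ≤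
      ∫⁻ σ in ball e 1, ENNReal.ofReal (b ⟪(e : E3), σ⟫ * (1 - cos ⟪w, (e : E3) - σ⟫)) ∂sphμ)
    (G : Measure E3) [IsFiniteMeasure G] {m r : ℝ} (hm : m ∈ Icc 0 1) (hr : 0 ≤ r) :
    ENNReal.ofReal (κ * (m ^ 2 * min (r ^ 2) (r ^ s))) * G {v | m ≤ ‖v‖} ≤
      ∫⁻ σ in ball e 1,
        ENNReal.ofReal (b ⟪(e : E3), σ⟫ * levyExponent G (r • ((e : E3) - σ))) ∂sphμ := by
  have hS : MeasurableSet {v : E3 | m ≤ ‖v‖} := measurableSet_le measurable_const measurable_norm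
  calc ENNReal.ofReal (κ * (m ^ 2 * min (r ^ 2) (r ^ s))) * G {v | m ≤ ‖v‖}
      = ∫⁻ _ in {v | m ≤ ‖v‖}, ENNReal.ofReal (κ * (m ^ 2 * min (r ^ 2) (r ^ s))) ∂G :=
        (setLIntegral_const _ _).symm
    _ ≤ ∫⁻ v in {v | m ≤ ‖v‖}, ∫⁻ σ in ball e 1,
          ENNReal.ofReal (b ⟪(e : E3), σ⟫ * (1 - cos ⟪v, r • ((e : E3) - σ)⟫)) ∂sphμ ∂G := by
        refine setLIntegral_mono' hS fun v hv ↦ ?_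
        have hrv : m * r ≤ ‖r • v‖ := by
          rw [norm_smul, norm_of_nonneg hr, mul_comm]
          exact mul_le_mul_of_nonneg_left hv hr
        simp only [inner_smul_right, ← real_inner_smul_left]
        refine le_trans (ENNReal.ofReal_le_ofReal ?_) (h (r • v))
        exact mul_le_mul_of_nonneg_left (sq_mul_min_sq_rpow_le hm hr hrv hs) hκ
    _ ≤ ∫⁻ v, ∫⁻ σ in ball e 1,
          ENNReal.ofReal (b ⟪(e : E3), σ⟫ * (1 - cos ⟪v, r • ((e : E3) - σ)⟫)) ∂sphμ ∂G :=
        setLIntegral_le_lintegral _ _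
    _ = ∫⁻ σ in ball e 1, ∫⁻ v,
          ENNReal.ofReal (b ⟪(e : E3), σ⟫ * (1 - cos ⟪v, r • ((e : E3) - σ)⟫)) ∂G ∂sphμ :=
        lintegral_lintegral_swap (by unfold Function.uncurry; fun_prop)
    _ = _ := by simp only [lintegral_ofReal_mul_one_sub_cos_inner (hb_nonneg _)]

lemma exists_tail_threshold {E : Type*} [NormedAddCommGroup E] [InnerProductSpace ℝ E]
    [MeasurableSpace E] [BorelSpace E] (η : E) {μ₀ : ℝ} (hμ : 0 < μ₀) :
    ∃ m ∈ Ioc (0 : ℝ) 1, ∀ G : Measure E, IsProbabilityMeasure G → μ₀ ≤ levyExponent G η →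
      μ₀ / 4 ≤ G.real {v | m ≤ ‖v‖} := by
  refine ⟨min 1 (√μ₀ / (‖η‖ + 1)), ⟨by positivity, min_le_left _ _⟩, fun G _ hG ↦ ?_⟩
  have hmη : min 1 (√μ₀ / (‖η‖ + 1)) * ‖η‖ ≤ √μ₀ :=
    calc min 1 (√μ₀ / (‖η‖ + 1)) * ‖η‖ ≤ √μ₀ / (‖η‖ + 1) * (‖η‖ + 1) := by
          gcongr
          · exact min_le_right _ _
          · linarith
      _ = √μ₀ := div_mul_cancel₀ _ (by positivity)
  have hsq := pow_le_pow_left₀ (by positivity) hmη 2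
  rw [sq_sqrt hμ.le] at hsq
  linarith [levyExponent_le_sq_add_measureReal (G := G) (m := min 1 (√μ₀ / (‖η‖ + 1))) η]

lemma exists_isCollisionCoercive {b : ℝ → ℝ} (hb_meas : Measurable b) (hb_nonneg : ∀ x, 0 ≤ b x)
    {c s : ℝ} (hs : s ∈ Ioc 0 2) (hc : 0 < c)
    (hb : ∀ᶠ θ in 𝓝[>] 0, c ≤ b (cos θ) * θ ^ (2 + 2 * s)) (η : E3) {μ₀ : ℝ} (hμ : 0 < μ₀) :
    ∃ κ > 0, ∀ φ, IsCharFn φ → μ₀ ≤ 1 - ‖φ η‖ ^ 2 → IsCollisionCoercive b κ s φ := by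
  obtain ⟨κ, hκ, hcos⟩ := exists_ofReal_mul_min_le_setLIntegral_one_sub_cos hs.1 hc hb
  obtain ⟨m, hm, htail⟩ := exists_tail_threshold η hμ
  have hm0 := hm.1
  refine ⟨κ * (m ^ 2 * (1 / 2) ^ 2) * (μ₀ / 4), by positivity, fun φ hφ hη ξ hξ ↦ ?_⟩
  obtain ⟨G, hG, hφG⟩ := hφ.exists_eq_levyExponent
  simp only [hφG] at hη ⊢
  obtain ⟨e, hξe⟩ := exists_sphere_eq_norm_smul hξ
  calc ENNReal.ofReal (κ * (m ^ 2 * (1 / 2) ^ 2) * (μ₀ / 4) * min (‖ξ‖ ^ 2) (‖ξ‖ ^ s))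
      ≤ ENNReal.ofReal (κ * (m ^ 2 * min ((‖ξ‖ / 2) ^ 2) ((‖ξ‖ / 2) ^ s)) *
          G.real {v | m ≤ ‖v‖}) := by
        have hmin := sq_mul_min_sq_rpow_le (m := 1 / 2) (y := ‖ξ‖ / 2) (by norm_num)
          (norm_nonneg ξ) (by linarith) (Ioc_subset_Icc_self hs)
        refine ENNReal.ofReal_le_ofReal ?_
        calc _ = κ * (m ^ 2 * ((1 / 2) ^ 2 * min (‖ξ‖ ^ 2) (‖ξ‖ ^ s))) * (μ₀ / 4) := by ring
          _ ≤ _ := by gcongr; exact htail G hG hη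
    _ = ENNReal.ofReal (κ * (m ^ 2 * min ((‖ξ‖ / 2) ^ 2) ((‖ξ‖ / 2) ^ s))) *
          G {v | m ≤ ‖v‖} := by
        rw [ENNReal.ofReal_mul (by positivity), ofReal_measureReal]
    _ ≤ _ := ofReal_mul_measure_le_setLIntegral_levyExponent hb_meas hb_nonneg hκ.le
        (Ioc_subset_Icc_self hs) (hcos e) G (Ioc_subset_Icc_self hm) (by positivity)
    _ ≤ _ := by
        simp only [← devCos_eq_inner hξ hξe, ← xiMinus_eq_smul_sub hξe]
        exact lintegral_mono_set (ball_one_subset_devCos_nonneg hξ hξe)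

end CollisionCoercivity

section Barrier

/-- The barrier `exp (ε (1 + τ + x)) (1 + δ x) ^ (-c τ)` at time `τ` and squared frequency
`x = |ξ| ^ 2`. The first factor makes the barrier exceed `1` initially and at high frequencies; it
disappears in the limit `ε → 0`. -/
def barrier (ε c δ τ x : ℝ) : ℝ := exp (ε * (1 + τ) + ε * x - c * τ * log (1 + δ * x))

variable {ε c δ τ x : ℝ}

lemma barrier_pos : 0 < barrier ε c δ τ x := exp_pos _

lemma continuous_barrier (hδ : 0 ≤ δ) :
    Continuous fun p : ℝ × E3 ↦ barrier ε c δ p.1 (‖p.2‖ ^ 2) := by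
  have hlog : Continuous fun p : ℝ × E3 ↦ log (1 + δ * ‖p.2‖ ^ 2) :=
    Continuous.log (by fun_prop) fun p ↦ by positivity
  unfold barrier
  fun_prop

lemma hasDerivAt_barrier_sq :
    HasDerivAt (fun τ ↦ barrier ε c δ τ x ^ 2)
      (2 * barrier ε c δ τ x ^ 2 * (ε - c * log (1 + δ * x))) τ := by
  have hlin : HasDerivAt (fun τ ↦ ε * (1 + τ) + ε * x - c * τ * log (1 + δ * x))
      (ε - c * log (1 + δ * x)) τ := by
    refine (((((hasDerivAt_id τ).const_add 1).const_mul ε).add_const (ε * x)).sub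
      (((hasDerivAt_id τ).const_mul c).mul_const (log (1 + δ * x)))).congr_deriv ?_
    ring
  refine (hlin.exp.pow 2).congr_deriv ?_
  rw [barrier]
  push_cast
  ring

lemma one_lt_barrier_zero_left (hε : 0 < ε) (hx : 0 ≤ x) : 1 < barrier ε c δ 0 x := by
  rw [barrier, one_lt_exp_iff]
  simp only [add_zero, mul_one, mul_zero, zero_mul, sub_zero]
  positivity

lemma one_lt_barrier_zero_right (hε : 0 < ε) (hτ : 0 ≤ τ) : 1 < barrier ε c δ τ 0 := by
  rw [barrier, one_lt_exp_iff]
  simp only [mul_zero, add_zero, log_one, sub_zero]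
  positivity

lemma tendsto_barrier_zero (hδ : 0 ≤ δ) (hx : 0 ≤ x) {k : ℕ} (hk : c * τ = k) :
    Tendsto (fun ε ↦ barrier ε c δ τ x) (𝓝[>] 0) (𝓝 ((1 + δ * x) ^ k)⁻¹) := by
  have hlim : barrier 0 c δ τ x = ((1 + δ * x) ^ k)⁻¹ := by
    rw [barrier, hk, ← log_pow, zero_mul, zero_mul, zero_add, zero_sub, exp_neg,
      exp_log (by positivity)]
  have hcont : Continuous fun ε ↦ barrier ε c δ τ x := by
    unfold barrier
    fun_prop
  rw [← hlim]
  exact (hcont.tendsto 0).mono_left nhdsWithin_le_nhds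

lemma log_le_mul_add_abs_log {l y : ℝ} (hl : 0 < l) (hy : 0 < y) :
    log y ≤ l * y + |log l| := by
  have hlog := log_le_sub_one_of_pos (mul_pos hl hy)
  rw [log_mul hl.ne' hy.ne'] at hlog
  linarith [neg_abs_le (log l)]

lemma exists_forall_lt_one_lt_barrier (hε : 0 < ε) (hc : 0 < c) (hδ : 0 < δ) {t : ℝ} (ht : 0 < t) :
    ∃ R, ∀ τ ∈ Icc 0 t, ∀ x, 0 ≤ x → R < x → 1 < barrier ε c δ τ x := by
  let l := ε / (2 * (c * t) * δ)
  have hl : 0 < l := by positivity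
  refine ⟨2 * (c * t * (l + |log l|)) / ε, fun τ hτ x hx hR ↦ ?_⟩
  rw [barrier, one_lt_exp_iff]
  have hlog : 0 ≤ log (1 + δ * x) := log_nonneg (by linarith [mul_nonneg hδ.le hx])
  have hle : c * τ * log (1 + δ * x) ≤ c * t * (l * (1 + δ * x) + |log l|) := by
    gcongr
    · exact hτ.2
    · exact log_le_mul_add_abs_log hl (by positivity)
  have hhalf : c * t * (l * (δ * x)) = ε * x / 2 := by
    simp only [l]
    field_simp
  rw [div_lt_iff₀ hε] at hR
  have hτ0 : 0 ≤ ε * τ := mul_nonneg hε.le hτ.1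
  linarith

lemma one_add_pow_le_one_add_two_pow_mul (k : ℕ) {z : ℝ} (hz : z ∈ Icc 0 1) :
    (1 + z) ^ k ≤ 1 + 2 ^ k * z := by
  suffices (1 + z) ^ k ≤ 1 + (2 ^ k - 1) * z by linarith [hz.1]
  induction k with
  | zero => simp
  | succ k ih =>
    have hpow : (0 : ℝ) ≤ 2 ^ k - 1 := sub_nonneg.2 (one_le_pow₀ one_le_two)
    calc (1 + z) ^ (k + 1) ≤ (1 + (2 ^ k - 1) * z) * (1 + z) := by
          rw [pow_succ]
          have := hz.1
          gcongr
      _ ≤ 1 + (2 ^ (k + 1) - 1) * z := by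
          rw [pow_succ]
          nlinarith [mul_nonneg hpow (mul_nonneg hz.1 (sub_nonneg.2 hz.2))]

lemma one_add_div_one_add_le {X q : ℝ} (hX : 0 ≤ X) (hq : q ∈ Icc 0 1) :
    (1 + X) / (1 + X * ((1 + q) / 2)) ≤ 1 + (1 - q) * (X / (1 + X)) := by
  have := hq.1
  have hq' : 0 ≤ 1 - q := sub_nonneg.2 hq.2
  have hhalf : (1 + X) / 2 ≤ 1 + X * ((1 + q) / 2) := by nlinarith
  calc (1 + X) / (1 + X * ((1 + q) / 2))
      = 1 + (1 - q) * (X / 2 / (1 + X * ((1 + q) / 2))) := by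
        field_simp
        ring
    _ ≤ 1 + (1 - q) * (X / 2 / ((1 + X) / 2)) := by gcongr
    _ = 1 + (1 - q) * (X / (1 + X)) := by
        field_simp

lemma div_one_add_pow_le_one_add_log {X q : ℝ} (hX : 0 ≤ X) (hq : q ∈ Icc 0 1) (k : ℕ) :
    ((1 + X) / (1 + X * ((1 + q) / 2))) ^ k ≤ 1 + 2 ^ k * log (1 + X) * (1 - q ^ 2) := by
  have := hq.1
  have hq' : 0 ≤ 1 - q := sub_nonneg.2 hq.2
  have hX1 : X / (1 + X) ≤ 1 := (div_le_one (by positivity)).2 (by linarith)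
  have hXlog : X / (1 + X) ≤ log (1 + X) :=
    calc X / (1 + X) = 1 - (1 + X)⁻¹ := by
          field_simp
          ring
      _ ≤ log (1 + X) := one_sub_inv_le_log_of_pos (by positivity)
  have hqsq : 1 - q ≤ 1 - q ^ 2 := by nlinarith
  calc ((1 + X) / (1 + X * ((1 + q) / 2))) ^ k ≤ (1 + (1 - q) * (X / (1 + X))) ^ k := by
        gcongr
        exact one_add_div_one_add_le hX hq
    _ ≤ 1 + 2 ^ k * ((1 - q) * (X / (1 + X))) :=
        one_add_pow_le_one_add_two_pow_mul k
          ⟨by positivity, mul_le_one₀ (by linarith) (by positivity) hX1⟩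
    _ ≤ 1 + 2 ^ k * ((1 - q ^ 2) * log (1 + X)) := by gcongr; exact hq'.trans hqsq
    _ = 1 + 2 ^ k * log (1 + X) * (1 - q ^ 2) := by ring

lemma barrier_mul_le (hε : 0 ≤ ε) (hδ : 0 ≤ δ) (hx : 0 ≤ x) {k : ℕ} (hk : c * τ ≤ k) {q : ℝ}
    (hq : q ∈ Icc 0 1) :
    barrier ε c δ τ (x * ((1 + q) / 2)) ≤
      barrier ε c δ τ x * (1 + 2 ^ k * log (1 + δ * x) * (1 - q ^ 2)) := by
  have := hq.1
  have hX : 0 ≤ δ * x := mul_nonneg hδ hx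
  have hxq : x * ((1 + q) / 2) ≤ x := mul_le_of_le_one_right hx (by linarith [hq.2])
  refine le_trans ?_ (mul_le_mul_of_nonneg_left (div_one_add_pow_le_one_add_log hX hq k)
    barrier_pos.le)
  rw [← exp_log (x := (_ / _) ^ k) (by positivity), barrier, barrier, ← exp_add, exp_le_exp,
    log_pow, log_div (by positivity) (by positivity), ← mul_assoc δ]
  have hlog : log (1 + δ * x * ((1 + q) / 2)) ≤ log (1 + δ * x) :=
    log_le_log (by positivity) (by nlinarith)
  linarith [mul_le_mul_of_nonneg_left hxq hε, mul_le_mul_of_nonneg_right hk (sub_nonneg.2 hlog)]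

lemma log_one_add_le_rpow_div {p y : ℝ} (hp : p ∈ Ioc 0 1) (hy : 0 ≤ y) :
    log (1 + y) ≤ y ^ p / p := by
  have hlog := log_le_sub_one_of_pos (x := (1 + y) ^ p) (by positivity)
  rw [log_rpow (by positivity)] at hlog
  have hadd := rpow_add_le_add_rpow zero_le_one hy hp.1.le hp.2
  rw [one_rpow] at hadd
  rw [le_div_iff₀ hp.1]
  linarith

lemma exists_mul_log_le_mul_min {s κ C : ℝ} (hs : s ∈ Ioc 0 2) (hκ : 0 < κ) (hC : 0 < C) :
    ∃ δ > 0, ∀ r, 0 ≤ r → C * log (1 + δ * r ^ 2) ≤ κ * min (r ^ 2) (r ^ s) := by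
  have hs0 := hs.1
  refine ⟨min (κ / C) ((κ * (s / 2) / C) ^ (s / 2)⁻¹), by positivity, fun r hr ↦ ?_⟩
  set δ := min (κ / C) ((κ * (s / 2) / C) ^ (s / 2)⁻¹)
  have hδ : 0 < δ := by positivity
  rw [mul_min_of_nonneg _ _ hκ.le]
  refine le_min ?_ ?_
  · calc C * log (1 + δ * r ^ 2) ≤ C * (κ / C * r ^ 2) := by
          gcongr
          refine (log_le_sub_one_of_pos (by positivity)).trans ?_
          rw [add_sub_cancel_left]
          gcongr
          exact min_le_left _ _
      _ = κ * r ^ 2 := by field_simp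
  · have hδs : δ ^ (s / 2) ≤ κ * (s / 2) / C := by
      rw [← rpow_inv_rpow (x := κ * (s / 2) / C) (y := s / 2) (by positivity) (by positivity)]
      gcongr
      exact min_le_right _ _
    calc C * log (1 + δ * r ^ 2) ≤ C * ((δ * r ^ 2) ^ (s / 2) / (s / 2)) := by
          gcongr
          exact log_one_add_le_rpow_div ⟨by positivity, by linarith [hs.2]⟩ (by positivity)
      _ = C * (δ ^ (s / 2) * r ^ s / (s / 2)) := by
          rw [mul_rpow hδ.le (by positivity), ← rpow_two, ← rpow_mul hr,
            mul_div_cancel₀ s two_ne_zero]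
      _ ≤ C * (κ * (s / 2) / C * r ^ s / (s / 2)) := by gcongr
      _ = κ * r ^ s := by field_simp

end Barrier

section FirstTouch

lemma exists_first_touch {X : Type*} [TopologicalSpace X] [T2Space X] {f : ℝ × X → ℝ} {t : ℝ}
    (ht : 0 ≤ t) (hf : ContinuousOn f (Icc 0 t ×ˢ univ)) (hinit : ∀ x, f (0, x) < 0) {K : Set X}
    (hK : IsCompact K) (hout : ∀ τ ∈ Icc 0 t, ∀ x ∉ K, f (τ, x) < 0) {x₁ : X}
    (hx₁ : 0 ≤ f (t, x₁)) :
    ∃ τ ∈ Ioc 0 t, ∃ x, f (τ, x) = 0 ∧ (∀ y, f (τ, y) ≤ 0) ∧ ∀ τ' ∈ Ico 0 τ, f (τ', x) < 0 := by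
  let Z := (Icc 0 t ×ˢ univ) ∩ f ⁻¹' Ici 0
  have hZ : IsCompact Z := by
    refine ((isCompact_Icc (a := 0) (b := t)).prod hK).of_isClosed_subset
      (hf.preimage_isClosed_of_isClosed (isClosed_Icc.prod isClosed_univ) isClosed_Ici) ?_
    rintro ⟨τ, x⟩ ⟨⟨hτ, -⟩, hfx⟩
    exact ⟨hτ, by_contra fun hx ↦ (hout τ hτ x hx).not_ge hfx⟩
  obtain ⟨⟨τ, x⟩, ⟨⟨hτ, -⟩, hfx⟩, hmin⟩ := hZ.exists_isMinOn
    ⟨(t, x₁), ⟨⟨⟨ht, le_rfl⟩, mem_univ _⟩, hx₁⟩⟩ continuousOn_fst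
  have hτ0 : 0 < τ := hτ.1.lt_of_ne' (by rintro rfl; exact (hinit x).not_ge hfx)
  have hbefore : ∀ τ' ∈ Ico 0 τ, ∀ y, f (τ', y) < 0 := fun τ' hτ' y ↦ by
    by_contra! hy
    exact hτ'.2.not_ge (hmin (⟨⟨⟨hτ'.1, hτ'.2.le.trans hτ.2⟩, mem_univ y⟩, hy⟩ : (τ', y) ∈ Z))
  have hle : ∀ y, f (τ, y) ≤ 0 := fun y ↦ by
    have hline : ContinuousOn (fun τ' ↦ f (τ', y)) (Icc 0 τ) :=
      hf.comp (by fun_prop) fun τ' hτ' ↦ ⟨⟨hτ'.1, hτ'.2.trans hτ.2⟩, mem_univ y⟩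
    exact isClosed_Iic.closure_subset <|
      ((hline τ (right_mem_Icc.2 hτ.1)).mono Ico_subset_Icc_self).mem_closure
        (by rw [closure_Ico hτ0.ne]; exact right_mem_Icc.2 hτ.1)
        fun τ' hτ' ↦ (hbefore τ' hτ' y).le
  exact ⟨τ, ⟨hτ0, hτ.2⟩, x, (hle x).antisymm hfx, hle, fun τ' hτ' ↦ hbefore τ' hτ' x⟩

lemma nonneg_of_hasDerivWithinAt_of_forall_le {f : ℝ → ℝ} {f' τ : ℝ} (hτ : 0 < τ)
    (hf : HasDerivWithinAt f f' (Ici 0) τ) (hmax : ∀ τ' ∈ Ico 0 τ, f τ' ≤ f τ) : 0 ≤ f' := by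
  have hloc : IsLocalMaxOn f (Icc 0 τ) τ := by
    filter_upwards [self_mem_nhdsWithin] with τ' hτ'
    rcases hτ'.2.eq_or_lt with rfl | hlt
    exacts [le_rfl, hmax τ' ⟨hτ'.1, hlt⟩]
  have hcone := hloc.hasFDerivWithinAt_nonpos (hf.mono Icc_subset_Ici_self).hasFDerivWithinAt
    (sub_mem_posTangentConeAt_of_segment_subset (y := 0)
      (by rw [segment_symm, segment_eq_Icc hτ.le]))
  rw [zero_sub, ContinuousLinearMap.toSpanSingleton_apply, smul_eq_mul] at hcone
  nlinarith

end FirstTouch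

section FiniteMoment

lemma mul_one_sub_norm_sq_le {φ₀ φ₁ φ₂ : ℂ} {β D : ℝ} (hβ : 0 ≤ β) (hD : 0 ≤ D) (h₀ : φ₀ ≠ 0)
    (h₁ : ‖φ₁‖ ≤ ‖φ₀‖ * (1 + D)) (h₂ : ‖φ₂‖ ≤ 1) :
    β * (1 - ‖φ₂‖ ^ 2) ≤
      2 * (β * D - (starRingEnd ℂ φ₀ * (β * (φ₁ * φ₂ - φ₀))).re / ‖φ₀‖ ^ 2) := by
  have hre : (starRingEnd ℂ φ₀ * (φ₁ * φ₂)).re ≤ ‖φ₀‖ ^ 2 * ((1 + D) * ‖φ₂‖) :=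
    calc (starRingEnd ℂ φ₀ * (φ₁ * φ₂)).re ≤ ‖φ₀‖ * (‖φ₁‖ * ‖φ₂‖) := by
          refine (Complex.re_le_norm _).trans_eq ?_
          rw [norm_mul, norm_mul, RCLike.norm_conj]
      _ ≤ ‖φ₀‖ * (‖φ₀‖ * (1 + D) * ‖φ₂‖) := by gcongr
      _ = ‖φ₀‖ ^ 2 * ((1 + D) * ‖φ₂‖) := by ring
  have hsplit : (starRingEnd ℂ φ₀ * (β * (φ₁ * φ₂ - φ₀))).re =
      β * ((starRingEnd ℂ φ₀ * (φ₁ * φ₂)).re - ‖φ₀‖ ^ 2) := by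
    rw [mul_left_comm, mul_sub, Complex.re_ofReal_mul, Complex.sub_re, Complex.conj_mul']
    norm_cast
  have hgain : (starRingEnd ℂ φ₀ * (β * (φ₁ * φ₂ - φ₀))).re / ‖φ₀‖ ^ 2 ≤
      β * ((1 + D) * ‖φ₂‖ - 1) := by
    rw [hsplit, div_le_iff₀ (pow_pos (norm_pos_iff.2 h₀) 2), mul_assoc, sub_mul, one_mul,
      mul_comm _ (‖φ₀‖ ^ 2)]
    gcongr
  have hquad : (1 + D) * ‖φ₂‖ - 1 ≤ D - (1 - ‖φ₂‖ ^ 2) / 2 := by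
    nlinarith [mul_le_mul_of_nonneg_left h₂ hD, sq_nonneg (1 - ‖φ₂‖)]
  linarith [mul_le_mul_of_nonneg_left hquad hβ]

variable {b : ℝ → ℝ} {ψ : ℝ → E3 → ℂ} {τ : ℝ} {ξ : E3}

lemma indicator_le_of_norm_xiPlus_le (hb_nonneg : ∀ x, 0 ≤ b x) (hψ : ∀ ζ, ‖ψ τ ζ‖ ≤ 1)
    (hξ : ψ τ ξ ≠ 0) {L : ℝ} (hL : 0 ≤ L)
    (hplus : ∀ σ, 0 ≤ devCos ξ σ →
      ‖ψ τ (xiPlus ξ σ)‖ ≤ ‖ψ τ ξ‖ * (1 + L * (1 - devCos ξ σ ^ 2))) (σ : sphere (0 : E3) 1) :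
    {σ | 0 ≤ devCos ξ σ}.indicator (fun σ ↦ b (devCos ξ σ) * (1 - ‖ψ τ (xiMinus ξ σ)‖ ^ 2)) σ ≤
      2 * (L * (b (devCos ξ σ) * (1 - devCos ξ σ ^ 2)) -
        (starRingEnd ℂ (ψ τ ξ) * bobylevIntegrand b ψ τ ξ σ).re / ‖ψ τ ξ‖ ^ 2) := by
  have hD : 0 ≤ L * (1 - devCos ξ σ ^ 2) := mul_nonneg hL (one_sub_devCos_sq_nonneg ξ σ)
  have hb := hb_nonneg (devCos ξ σ)
  rw [mul_left_comm, bobylevIntegrand, ← devCos, indicator_apply]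
  split_ifs with hσ
  · exact mul_one_sub_norm_sq_le hb hD hξ (hplus σ hσ) (hψ _)
  · rw [mem_ofPred_eq, not_le] at hσ
    have hminus := hplus (-σ) (by rw [devCos_neg]; linarith)
    rw [xiPlus_neg, devCos_neg, neg_sq] at hminus
    rw [mul_comm (ψ τ (xiPlus ξ σ))]
    refine le_trans ?_ (mul_one_sub_norm_sq_le hb hD hξ hminus (hψ _))
    exact mul_nonneg hb (sub_nonneg.2 (pow_le_one₀ (norm_nonneg _) (hψ _)))

lemma IsCollisionCoercive.mul_min_le (hb_meas : Measurable b) (hb_nonneg : ∀ x, 0 ≤ b x)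
    {κ s : ℝ} (hcoer : IsCollisionCoercive b κ s (ψ τ)) (hψ : ∀ ζ, ‖ψ τ ζ‖ ≤ 1)
    (hint : Integrable (bobylevIntegrand b ψ τ ξ) sphμ) (hmom : angularMoment b ξ < ⊤)
    (hξ₀ : ξ ≠ 0) (hξ : ψ τ ξ ≠ 0) {L : ℝ} (hL : 0 ≤ L)
    (hplus : ∀ σ, 0 ≤ devCos ξ σ →
      ‖ψ τ (xiPlus ξ σ)‖ ≤ ‖ψ τ ξ‖ * (1 + L * (1 - devCos ξ σ ^ 2))) :
    κ * min (‖ξ‖ ^ 2) (‖ξ‖ ^ s) ≤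
      2 * (L * (angularMoment b ξ).toReal -
        (starRingEnd ℂ (ψ τ ξ) * ∫ σ, bobylevIntegrand b ψ τ ξ σ ∂sphμ).re / ‖ψ τ ξ‖ ^ 2) := by
  let l : sphere (0 : E3) 1 → ℝ := fun σ ↦ b (devCos ξ σ) * (1 - devCos ξ σ ^ 2)
  let g : sphere (0 : E3) 1 → ℂ := fun σ ↦ starRingEnd ℂ (ψ τ ξ) * bobylevIntegrand b ψ τ ξ σ
  let J : sphere (0 : E3) 1 → ℝ := fun σ ↦ 2 * (L * l σ - (g σ).re / ‖ψ τ ξ‖ ^ 2)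
  have hl0 : 0 ≤ᵐ[sphμ] l :=
    ae_of_all _ fun σ ↦ mul_nonneg (hb_nonneg _) (one_sub_devCos_sq_nonneg ξ σ)
  have hlm : AEStronglyMeasurable l sphμ := Measurable.aestronglyMeasurable (by fun_prop)
  have hl : Integrable l sphμ := ⟨hlm, (hasFiniteIntegral_iff_ofReal hl0).2 hmom⟩
  have hg : Integrable g sphμ := hint.const_mul _
  have hr : Integrable (fun σ ↦ (g σ).re / ‖ψ τ ξ‖ ^ 2) sphμ := hg.re.div_const _
  have hJ : Integrable J sphμ := ((hl.const_mul L).sub hr).const_mul 2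
  have hpt := indicator_le_of_norm_xiPlus_le hb_nonneg hψ hξ hL hplus
  have hJ0 : ∀ σ, 0 ≤ J σ := fun σ ↦
    (indicator_nonneg (fun σ _ ↦ mul_nonneg (hb_nonneg _)
      (sub_nonneg.2 (pow_le_one₀ (norm_nonneg _) (hψ _)))) σ).trans (hpt σ)
  have hJint : ∫ σ, J σ ∂sphμ = 2 * (L * (angularMoment b ξ).toReal -
      (starRingEnd ℂ (ψ τ ξ) * ∫ σ, bobylevIntegrand b ψ τ ξ σ ∂sphμ).re / ‖ψ τ ξ‖ ^ 2) := by
    have hre : ∫ σ, (g σ).re ∂sphμ = (∫ σ, g σ ∂sphμ).re := integral_re hg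
    rw [integral_const_mul, integral_sub (hl.const_mul L) hr, integral_const_mul, integral_div,
      hre, integral_const_mul, integral_eq_lintegral_of_nonneg_ae hl0 hlm, angularMoment]
  rw [← hJint, ← ENNReal.ofReal_le_ofReal_iff (integral_nonneg hJ0),
    ofReal_integral_eq_lintegral_ofReal hJ (ae_of_all _ hJ0)]
  refine (hcoer ξ hξ₀).trans ?_
  rw [← lintegral_indicator (measurableSet_le measurable_const (continuous_devCos ξ).measurable)]
  refine lintegral_mono fun σ ↦ le_trans (le_of_eq ?_) (ENNReal.ofReal_le_ofReal (hpt σ))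
  rw [indicator_apply, indicator_apply, apply_ite ENNReal.ofReal, ENNReal.ofReal_zero]

lemma IsBobylevSolution.norm_le_one {ψ₀ : E3 → ℂ} (hψ : IsBobylevSolution b ψ ψ₀) (hτ : 0 ≤ τ)
    (ζ : E3) : ‖ψ τ ζ‖ ≤ 1 :=
  (hψ.isCharFn τ hτ).norm_le_one ζ

lemma IsBobylevSolution.hasDerivWithinAt_norm_sq {ψ₀ : E3 → ℂ} (hψ : IsBobylevSolution b ψ ψ₀)
    (hτ : 0 ≤ τ) : HasDerivWithinAt (fun τ ↦ ‖ψ τ ξ‖ ^ 2)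
      (2 * (starRingEnd ℂ (ψ τ ξ) * ∫ σ, bobylevIntegrand b ψ τ ξ σ ∂sphμ).re) (Ici 0) τ := by
  refine (hψ.eq τ hτ ξ).norm_sq.congr_deriv ?_
  rw [Complex.inner, mul_comm (starRingEnd ℂ (ψ τ ξ))]

lemma IsBobylevSolution.exists_first_barrier_touch {ψ₀ : E3 → ℂ} (hψ : IsBobylevSolution b ψ ψ₀)
    {ε c δ t : ℝ} (hε : 0 < ε) (hc : 0 < c) (hδ : 0 < δ) (ht : 0 < t) {ζ : E3}
    (hζ : barrier ε c δ t (‖ζ‖ ^ 2) ≤ ‖ψ t ζ‖) :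
    ∃ τ ∈ Ioc 0 t, ∃ ξ, ‖ψ τ ξ‖ = barrier ε c δ τ (‖ξ‖ ^ 2) ∧
      (∀ ζ, ‖ψ τ ζ‖ ≤ barrier ε c δ τ (‖ζ‖ ^ 2)) ∧
      ∀ τ' ∈ Ico 0 τ, ‖ψ τ' ξ‖ < barrier ε c δ τ' (‖ξ‖ ^ 2) := by
  let f : ℝ × E3 → ℝ := fun p ↦ ‖ψ p.1 p.2‖ - barrier ε c δ p.1 (‖p.2‖ ^ 2)
  have hf : ContinuousOn f (Icc 0 t ×ˢ univ) :=
    (hψ.cont.mono (prod_mono_left Icc_subset_Ici_self)).norm.sub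
      (continuous_barrier hδ.le).continuousOn
  have hneg : ∀ τ ∈ Icc 0 t, ∀ ξ : E3, 1 < barrier ε c δ τ (‖ξ‖ ^ 2) → f (τ, ξ) < 0 :=
    fun τ hτ ξ hξ ↦ sub_neg.2 ((hψ.norm_le_one hτ.1 ξ).trans_lt hξ)
  obtain ⟨R, hR⟩ := exists_forall_lt_one_lt_barrier hε hc hδ ht
  obtain ⟨τ, hτ, ξ, heq, hle, hlt⟩ := exists_first_touch ht.le hf
    (fun ξ ↦ hneg 0 ⟨le_rfl, ht.le⟩ ξ (one_lt_barrier_zero_left hε (by positivity)))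
    (isCompact_closedBall 0 (√R))
    (fun τ hτ ξ hξ ↦ hneg τ hτ ξ (hR τ hτ _ (by positivity)
      (lt_sq_of_sqrt_lt (by simpa using hξ)))) (sub_nonneg.2 hζ)
  exact ⟨τ, hτ, ξ, sub_eq_zero.1 heq, fun ζ ↦ sub_nonpos.1 (hle ζ), fun τ' hτ' ↦
    sub_neg.1 (hlt τ' hτ')⟩

lemma IsBobylevSolution.norm_le_barrier {ψ₀ : E3 → ℂ} (hψ : IsBobylevSolution b ψ ψ₀)
    (hb_meas : Measurable b) (hb_nonneg : ∀ x, 0 ≤ b x) {t κ s Λ : ℝ} (ht : 0 < t)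
    (hcoer : ∀ τ ∈ Icc 0 t, IsCollisionCoercive b κ s (ψ τ))
    (hΛ : ∀ ξ ≠ 0, angularMoment b ξ = ENNReal.ofReal Λ) (hΛ0 : 0 ≤ Λ)
    {ε c δ : ℝ} {k : ℕ} (hε : 0 < ε) (hc : 0 < c) (hδ : 0 < δ) (hk : c * t = k)
    (hδκ : ∀ r, 0 ≤ r → 2 * (2 ^ k * Λ + c) * log (1 + δ * r ^ 2) ≤ κ * min (r ^ 2) (r ^ s))
    (ζ : E3) : ‖ψ t ζ‖ ≤ barrier ε c δ t (‖ζ‖ ^ 2) := by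
  by_contra! hζ
  obtain ⟨τ, hτ, ξ, heq, hle, hlt⟩ := hψ.exists_first_barrier_touch hε hc hδ ht hζ.le
  have hψτ : ∀ ζ, ‖ψ τ ζ‖ ≤ 1 := hψ.norm_le_one hτ.1.le
  have hpos : 0 < ‖ψ τ ξ‖ := heq ▸ barrier_pos
  have hξ₀ : ξ ≠ 0 := by
    rintro rfl
    rw [norm_zero, zero_pow two_ne_zero] at heq
    exact (heq.trans_gt (one_lt_barrier_zero_right hε hτ.1.le)).not_ge (hψτ 0)
  have hck : c * τ ≤ k := hk ▸ mul_le_mul_of_nonneg_left hτ.2 hc.le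
  have hplus : ∀ σ, 0 ≤ devCos ξ σ → ‖ψ τ (xiPlus ξ σ)‖ ≤
      ‖ψ τ ξ‖ * (1 + 2 ^ k * log (1 + δ * ‖ξ‖ ^ 2) * (1 - devCos ξ σ ^ 2)) := fun σ hσ ↦ by
    refine (hle _).trans ?_
    rw [norm_xiPlus_sq, heq]
    exact barrier_mul_le hε.le hδ.le (by positivity) hck ⟨hσ, (abs_le.1 (abs_devCos_le_one ξ σ)).2⟩
  have hlog : 0 ≤ log (1 + δ * ‖ξ‖ ^ 2) := log_nonneg (le_add_of_nonneg_right (by positivity))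
  have hloss := (hcoer τ ⟨hτ.1.le, hτ.2⟩).mul_min_le hb_meas hb_nonneg hψτ
    (hψ.integrable τ hτ.1.le ξ) (by rw [hΛ ξ hξ₀]; exact ENNReal.ofReal_lt_top) hξ₀
    (norm_pos_iff.1 hpos) (by positivity) hplus
  have hderiv := nonneg_of_hasDerivWithinAt_of_forall_le hτ.1
    ((hψ.hasDerivWithinAt_norm_sq hτ.1.le).sub
      (hasDerivAt_barrier_sq (ε := ε) (c := c) (δ := δ) (x := ‖ξ‖ ^ 2)).hasDerivWithinAt)
    fun τ' hτ' ↦ by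
      simp only [Pi.sub_apply]
      rw [heq, sub_self, sub_nonpos]
      exact pow_le_pow_left₀ (norm_nonneg _) (hlt τ' hτ').le 2
  have hrate : ε - c * log (1 + δ * ‖ξ‖ ^ 2) ≤
      (starRingEnd ℂ (ψ τ ξ) * ∫ σ, bobylevIntegrand b ψ τ ξ σ ∂sphμ).re / ‖ψ τ ξ‖ ^ 2 := by
    rw [le_div_iff₀ (by positivity)]
    rw [← heq] at hderiv
    linarith
  rw [hΛ ξ hξ₀, ENNReal.toReal_ofReal hΛ0] at hloss
  linarith [hδκ ‖ξ‖ (norm_nonneg ξ)]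

/-- Decay of order `k` in the squared frequency, in the form produced by the barrier. -/
def HasFourierDecay (k : ℕ) (φ : E3 → ℂ) : Prop :=
  ∃ δ > 0, ∀ ξ, ‖φ ξ‖ ^ 2 ≤ ((1 + δ * ‖ξ‖ ^ 2) ^ k)⁻¹

lemma IsBobylevSolution.hasFourierDecay_of_angularMoment_lt_top {ψ₀ : E3 → ℂ}
    (hψ : IsBobylevSolution b ψ ψ₀) (hb_meas : Measurable b) (hb_nonneg : ∀ x, 0 ≤ b x)
    {t κ s : ℝ} (hs : s ∈ Ioc 0 2) (ht : 0 < t) (hκ : 0 < κ)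
    (hcoer : ∀ τ ∈ Icc 0 t, IsCollisionCoercive b κ s (ψ τ)) {η : E3} (hη : η ≠ 0)
    (hmom : angularMoment b η < ⊤) {k : ℕ} (hk : 0 < k) : HasFourierDecay k (ψ t) := by
  have hc : 0 < k / t := by positivity
  obtain ⟨δ, hδ, hδκ⟩ := exists_mul_log_le_mul_min hs hκ
    (C := 2 * (2 ^ k * (angularMoment b η).toReal + k / t)) (by positivity)
  refine ⟨δ, hδ, fun ξ ↦ ?_⟩
  have hbarrier : ∀ ε > 0, ‖ψ t ξ‖ ≤ barrier ε (k / t) δ t (‖ξ‖ ^ 2) := fun ε hε ↦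
    hψ.norm_le_barrier hb_meas hb_nonneg ht hcoer
      (fun ξ hξ ↦ by rw [ENNReal.ofReal_toReal hmom.ne, angularMoment_eq hb_meas hξ hη])
      ENNReal.toReal_nonneg hε hc hδ (div_mul_cancel₀ _ ht.ne') hδκ ξ
  refine (pow_le_of_le_one (norm_nonneg _) (hψ.norm_le_one ht.le ξ) two_ne_zero).trans ?_
  exact ge_of_tendsto (tendsto_barrier_zero hδ.le (by positivity) (div_mul_cancel₀ _ ht.ne'))
    (eventually_mem_nhdsWithin.mono hbarrier)

end FiniteMoment

section QuadraticGrowth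

open Asymptotics ProbabilityTheory

variable {E : Type*} [NormedAddCommGroup E] [InnerProductSpace ℝ E] [MeasurableSpace E]
  {G : Measure E}

/-- The directions in which `levyExponent G` grows at least quadratically near the origin. -/
def quadraticGrowthDirections (G : Measure E) : Submodule ℝ E where
  carrier := {ν | (fun ζ ↦ ⟪ν, ζ⟫ ^ 2) =O[𝓝 0] levyExponent G}
  add_mem' {ν ν'} hν hν' := by
    refine .trans (.of_norm_le fun ζ ↦ ?_) ((hν.const_mul_left 2).add (hν'.const_mul_left 2))
    rw [inner_add_left, norm_of_nonneg (by positivity)]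
    linarith [add_sq_le (a := ⟪ν, ζ⟫) (b := ⟪ν', ζ⟫)]
  zero_mem' := by simpa using isBigO_zero _ _
  smul_mem' c ν hν := by
    simpa only [mem_ofPred_eq, real_inner_smul_left, mul_pow] using hν.const_mul_left (c ^ 2)

lemma mem_quadraticGrowthDirections {ν : E} :
    ν ∈ quadraticGrowthDirections G ↔ (fun ζ ↦ ⟪ν, ζ⟫ ^ 2) =O[𝓝 0] levyExponent G := Iff.rfl

variable [FiniteDimensional ℝ E]

lemma isBigO_norm_sq_levyExponent (h : quadraticGrowthDirections G = ⊤) :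
    (fun ζ ↦ ‖ζ‖ ^ 2) =O[𝓝 0] levyExponent G := by
  simp only [← (stdOrthonormalBasis ℝ E).sum_sq_norm_inner_right, norm_eq_abs, sq_abs]
  exact .fun_sum fun i _ ↦ mem_quadraticGrowthDirections.1 (h ▸ Submodule.mem_top)

variable [BorelSpace E] [IsFiniteMeasure G]

lemma memLp_id_restrict_closedBall (M : ℝ) {p : ENNReal} :
    MemLp id p (G.restrict (closedBall 0 M)) :=
  .of_bound aestronglyMeasurable_id M <|
    (ae_restrict_mem measurableSet_closedBall).mono fun _ hv ↦ by simpa using hv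

lemma setIntegral_inner_sq_le {M : ℝ} {ζ : E} (h : M * ‖ζ‖ ≤ π) :
    ∫ v in closedBall 0 M, ⟪v, ζ⟫ ^ 2 ∂G ≤ 5 * levyExponent G ζ := by
  have hint := (integrable_one_sub_cos_inner (G := G) ζ).const_mul 5
  rw [levyExponent, ← integral_const_mul]
  refine (setIntegral_mono_on ?_ hint.integrableOn measurableSet_closedBall fun v hv ↦ ?_).trans
    (setIntegral_le_integral hint (ae_of_all _ fun v ↦ ?_))
  · exact ((memLp_id_restrict_closedBall M).inner_const ζ).integrable_sq
  · have hvζ : |⟪v, ζ⟫| ≤ π := (abs_real_inner_le_norm v ζ).trans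
      ((mul_le_mul_of_nonneg_right (mem_closedBall_zero_iff.1 hv) (norm_nonneg ζ)).trans h)
    linarith [sq_div_five_le_one_sub_cos hvζ]
  · exact mul_nonneg (by norm_num) (sub_nonneg.2 (cos_le_one _))

lemma exists_setIntegral_inner_sq_pos {η : E} (hη : levyExponent G η ≠ 0) :
    ∃ M : ℝ, 0 < M ∧ 0 < ∫ v in closedBall 0 M, ⟪v, η⟫ ^ 2 ∂G := by
  by_contra! h
  have hball : ∀ n : ℕ, ∀ᵐ v ∂G.restrict (closedBall 0 (n + 1)), ⟪v, η⟫ = 0 := fun n ↦ by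
    have hzero := (h (n + 1) (by positivity)).antisymm (integral_nonneg fun v ↦ sq_nonneg _)
    have hint : Integrable (fun v ↦ ⟪v, η⟫ ^ 2) (G.restrict (closedBall 0 (n + 1))) :=
      ((memLp_id_restrict_closedBall _).inner_const η).integrable_sq
    rw [integral_eq_zero_iff_of_nonneg (fun v ↦ sq_nonneg _) hint] at hzero
    exact hzero.mono fun v hv ↦ by simpa using hv
  have hall : ∀ᵐ v ∂G, ⟪v, η⟫ = 0 := by
    rw [← Measure.restrict_univ (μ := G), ← iUnion_closedBall_nat (0 : E)]
    exact (ae_restrict_iUnion_iff _ _).2 fun n ↦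
      ae_mono (Measure.restrict_mono (closedBall_subset_closedBall (by simp)) le_rfl) (hball n)
  exact hη (integral_eq_zero_of_ae (hall.mono fun v hv ↦ by simp [hv]))

/- The direction is `∫ ⟪v, η⟫ v dG` over a large ball, and the growth is the Cauchy-Schwarz
inequality for the second moments of `G` on that ball. -/
lemma exists_mem_quadraticGrowthDirections_inner_ne_zero {η : E} (hη : levyExponent G η ≠ 0) :
    ∃ ν ∈ quadraticGrowthDirections G, ⟪ν, η⟫ ≠ 0 := by
  obtain ⟨M, hM, hpos⟩ := exists_setIntegral_inner_sq_pos hη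
  let A := covarianceOperator (G.restrict (closedBall 0 M))
  have hA : ∀ x y, ⟪A x, y⟫ = ∫ v in closedBall 0 M, ⟪x, v⟫ * ⟪y, v⟫ ∂G :=
    covarianceOperator_inner (memLp_id_restrict_closedBall M)
  have hAself : ∀ x, ⟪A x, x⟫ = ∫ v in closedBall 0 M, ⟪v, x⟫ ^ 2 ∂G := fun x ↦ by
    simp only [hA, real_inner_comm x, sq]
  refine ⟨A η, .of_bound (5 * ⟪A η, η⟫) ?_, by rw [hAself]; exact hpos.ne'⟩
  filter_upwards [closedBall_mem_nhds (0 : E) (div_pos pi_pos hM)] with ζ hζ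
  rw [mem_closedBall_zero_iff, le_div_iff₀' hM] at hζ
  have hcs := LinearMap.BilinForm.apply_sq_le_of_symm
    ((innerₗ E).comp A.toLinearMap) (fun x ↦ isPositive_covarianceOperator.inner_nonneg_left x)
      ⟨fun x y ↦ by simp [hA, mul_comm]⟩ η ζ
  have hζ' := setIntegral_inner_sq_le (G := G) hζ
  rw [norm_of_nonneg (sq_nonneg _), norm_of_nonneg (levyExponent_nonneg ζ)]
  calc ⟪A η, ζ⟫ ^ 2 ≤ ⟪A η, η⟫ * ⟪A ζ, ζ⟫ := hcs
    _ ≤ ⟪A η, η⟫ * (5 * levyExponent G ζ) := by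
        rw [hAself ζ]
        exact mul_le_mul_of_nonneg_left hζ' (by rw [hAself]; exact hpos.le)
    _ = 5 * ⟪A η, η⟫ * levyExponent G ζ := by ring

end QuadraticGrowth

section CollisionDefect

/-- The angular factor of the collision integrand, without the kernel. -/
def collisionDefect (φ : E3 → ℂ) (ξ : E3) (σ : sphere (0 : E3) 1) : ℂ :=
  φ (xiPlus ξ σ) * φ (xiMinus ξ σ) - φ ξ

/-- Absolute convergence of the collision integral of `φ` at every frequency. -/
def HasIntegrableCollisions (b : ℝ → ℝ) (φ : E3 → ℂ) : Prop :=
  ∀ ξ, Integrable (fun σ ↦ (b (devCos ξ σ) : ℂ) * collisionDefect φ ξ σ) sphμ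

variable {b : ℝ → ℝ} {φ : E3 → ℂ} {ξ : E3}

lemma HasIntegrableCollisions.lintegral_ofReal_mul_lt_top (hint : HasIntegrableCollisions b φ)
    (hb : ∀ x, 0 ≤ b x) {f : sphere (0 : E3) 1 → ℝ} {C : ℝ}
    (hf : ∀ σ, f σ ≤ C * ‖collisionDefect φ ξ σ‖) :
    ∫⁻ σ, ENNReal.ofReal (b (devCos ξ σ) * f σ) ∂sphμ < ⊤ := by
  refine (lintegral_mono fun σ ↦ ENNReal.ofReal_le_ofReal ?_).trans_lt
    ((hint ξ).norm.const_mul C).lintegral_lt_top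
  rw [norm_mul, Complex.norm_of_nonneg (hb _), mul_left_comm]
  exact mul_le_mul_of_nonneg_left (hf σ) (hb _)

lemma IsCharFn.one_sub_norm_xiMinus_sq_le (hφ : IsCharFn φ) (hξ : ‖φ ξ‖ = 1)
    (σ : sphere (0 : E3) 1) :
    1 - ‖φ (xiMinus ξ σ)‖ ^ 2 ≤ 2 * ‖collisionDefect φ ξ σ‖ := by
  have htri := norm_sub_norm_le (φ ξ) (φ (xiPlus ξ σ) * φ (xiMinus ξ σ))
  rw [norm_sub_rev, hξ, norm_mul] at htri
  change _ ≤ ‖collisionDefect φ ξ σ‖ at htri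
  have hplus := mul_le_of_le_one_left (norm_nonneg (φ (xiMinus ξ σ)))
    (hφ.norm_le_one (xiPlus ξ σ))
  nlinarith [hφ.norm_le_one (xiMinus ξ σ), norm_nonneg (φ (xiMinus ξ σ))]

end CollisionDefect

section OrthonormalFrame

lemma exists_orthonormalBasis_eq_and_eq {x y : E3} (hx : ‖x‖ = 1) (hy : ‖y‖ = 1)
    (hxy : ⟪x, y⟫ = 0) : ∃ B : OrthonormalBasis (Fin 3) ℝ E3, B 0 = x ∧ B 1 = y := by
  obtain ⟨z, hz, hxz, hyz⟩ := exists_norm_eq_one_inner_eq_zero (by simp) x y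
  have hv : Orthonormal ℝ ![x, y, z] := by
    simp [orthonormal_vecCons_iff, Fin.forall_fin_succ, *]
  obtain ⟨B, hB⟩ := Orthonormal.exists_orthonormalBasis_extension_of_card_eq (s := univ)
    (by simp) (hv.comp _ Subtype.val_injective)
  exact ⟨B, hB 0 trivial, hB 1 trivial⟩

lemma one_sub_devCos_sq_eq (B : OrthonormalBasis (Fin 3) ℝ E3) (σ : sphere (0 : E3) 1) :
    1 - devCos (B 0) σ ^ 2 = ⟪B 1, (σ : E3)⟫ ^ 2 + ⟪B 2, (σ : E3)⟫ ^ 2 := by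
  have hsum := B.sum_sq_norm_inner_right (σ : E3)
  simp only [Fin.sum_univ_three, norm_eq_of_mem_sphere, one_pow, norm_eq_abs, sq_abs] at hsum
  rw [devCos, B.norm_eq_one, div_one]
  linarith

lemma angularMoment_eq_two_mul_lintegral_inner_sq {b : ℝ → ℝ} (hb_meas : Measurable b)
    (hb_nonneg : ∀ x, 0 ≤ b x) (B : OrthonormalBasis (Fin 3) ℝ E3) :
    angularMoment b (B 0) =
      2 * ∫⁻ σ, ENNReal.ofReal (b (devCos (B 0) σ) * ⟪B 1, (σ : E3)⟫ ^ 2) ∂sphμ := by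
  let R := B.equiv B (Equiv.swap 1 2)
  have hR : ∀ i, R (B i) = B (Equiv.swap 1 2 i) := fun i ↦ B.equiv_apply_basis ..
  have hsymm : ∫⁻ σ, ENNReal.ofReal (b (devCos (B 0) σ) * ⟪B 2, (σ : E3)⟫ ^ 2) ∂sphμ =
      ∫⁻ σ, ENNReal.ofReal (b (devCos (B 0) σ) * ⟪B 1, (σ : E3)⟫ ^ 2) ∂sphμ := by
    rw [← (measurePreserving_sphereMap_sphμ R).lintegral_comp (by fun_prop)]
    congr 1 with σ
    rw [← R.inner_map_map (B 1), coe_sphereMap, ← devCos_map_sphereMap R (B 0) σ, hR, hR]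
    rfl
  simp only [angularMoment, one_sub_devCos_sq_eq, mul_add]
  simp_rw [ENNReal.ofReal_add (mul_nonneg (hb_nonneg _) (sq_nonneg _))
    (mul_nonneg (hb_nonneg _) (sq_nonneg _))]
  rw [lintegral_add_left (by fun_prop), hsymm, two_mul]

end OrthonormalFrame

section InfiniteMoment

open Asymptotics

variable {b : ℝ → ℝ} {φ : E3 → ℂ} {G : Measure E3}

lemma norm_xiMinus_le (ξ : E3) (σ : sphere (0 : E3) 1) : ‖xiMinus ξ σ‖ ≤ ‖ξ‖ := by
  refine le_of_sq_le_sq ?_ (norm_nonneg ξ)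
  rw [norm_xiMinus_sq]
  exact mul_le_of_le_one_right (sq_nonneg _)
    (by linarith [neg_le_of_abs_le (abs_devCos_le_one ξ σ)])

lemma angularMoment_lt_top_of_mem_quadraticGrowthDirections (hb_meas : Measurable b)
    (hb_nonneg : ∀ x, 0 ≤ b x) (hφ : IsCharFn φ) (hint : HasIntegrableCollisions b φ)
    (hφG : ∀ ξ, 1 - ‖φ ξ‖ ^ 2 = levyExponent G ξ) {B : OrthonormalBasis (Fin 3) ℝ E3}
    (hline : ∀ r : ℝ, ‖φ (r • B 0)‖ = 1) (hB : B 1 ∈ quadraticGrowthDirections G) :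
    angularMoment b (B 0) < ⊤ := by
  obtain ⟨C, hC, hgrowth⟩ := (mem_quadraticGrowthDirections.1 hB).exists_pos
  obtain ⟨r, hr, hball⟩ := Metric.eventually_nhds_iff_ball.1 hgrowth.bound
  have hnorm : ‖(r / 2) • B 0‖ = r / 2 := by
    rw [norm_smul, B.norm_eq_one, mul_one, norm_of_nonneg (by positivity)]
  rw [angularMoment_eq_two_mul_lintegral_inner_sq hb_meas hb_nonneg,
    ← devCos_smul (half_pos hr) (B 0)]
  refine ENNReal.mul_lt_top (by simp) (hint.lintegral_ofReal_mul_lt_top hb_nonneg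
    (C := 2 * C / (r / 4) ^ 2) fun σ ↦ ?_)
  have hinner : ⟪B 1, xiMinus ((r / 2) • B 0) σ⟫ = -(r / 4) * ⟪B 1, (σ : E3)⟫ := by
    rw [xiMinus, hnorm, inner_sub_right, inner_smul_right, inner_smul_right, inner_smul_right,
      B.inner_eq_zero (by decide)]
    ring
  have hsmall := hball (xiMinus ((r / 2) • B 0) σ) <| mem_ball_zero_iff.2 <|
    (norm_xiMinus_le _ σ).trans_lt (by rw [hnorm]; exact half_lt_self hr)
  rw [hinner, ← hφG, norm_of_nonneg (sq_nonneg _), norm_of_nonneg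
    (sub_nonneg.2 (pow_le_one₀ (norm_nonneg _) (hφ.norm_le_one _)))] at hsmall
  rw [div_mul_eq_mul_div, le_div_iff₀ (by positivity)]
  calc ⟪B 1, (σ : E3)⟫ ^ 2 * (r / 4) ^ 2 = (-(r / 4) * ⟪B 1, (σ : E3)⟫) ^ 2 := by ring
    _ ≤ C * (2 * ‖collisionDefect φ ((r / 2) • B 0) σ‖) := hsmall.trans
        (mul_le_mul_of_nonneg_left (hφ.one_sub_norm_xiMinus_sq_le (hline _) σ) hC.le)
    _ = 2 * C * ‖collisionDefect φ ((r / 2) • B 0) σ‖ := by ring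

lemma quadraticGrowthDirections_eq_top [IsFiniteMeasure G] (hb_meas : Measurable b)
    (hb_nonneg : ∀ x, 0 ≤ b x) (hφ : IsCharFn φ) (hint : HasIntegrableCollisions b φ)
    (hφG : ∀ ξ, 1 - ‖φ ξ‖ ^ 2 = levyExponent G ξ) {η : E3} (hη : ‖φ η‖ ≠ 1)
    (hmom : ∀ ξ ≠ 0, angularMoment b ξ = ⊤) : quadraticGrowthDirections G = ⊤ := by
  by_contra hN
  have hGne : ∀ {ξ}, ‖φ ξ‖ ≠ 1 → levyExponent G ξ ≠ 0 := fun h ↦ by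
    rw [← hφG, sub_ne_zero]
    exact Ne.symm ((pow_eq_one_iff_of_nonneg (norm_nonneg _) two_ne_zero).not.2 h)
  obtain ⟨ω, hω, hω0⟩ := Submodule.exists_mem_ne_zero_of_ne_bot
    (mt Submodule.orthogonal_eq_bot_iff.1 hN)
  have hflat : ∀ r : ℝ, ‖φ (r • ω)‖ = 1 := fun r ↦ by
    by_contra hr
    obtain ⟨ν, hν, hne⟩ := exists_mem_quadraticGrowthDirections_inner_ne_zero (hGne hr)
    exact hne (by rw [inner_smul_right, hω ν hν, mul_zero])
  obtain ⟨ν, hν, hνη⟩ := exists_mem_quadraticGrowthDirections_inner_ne_zero (hGne hη)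
  have hν0 : ν ≠ 0 := by rintro rfl; exact hνη (inner_zero_left η)
  obtain ⟨B, hB0, hB1⟩ := exists_orthonormalBasis_eq_and_eq (NormedSpace.norm_normalize hω0)
    (NormedSpace.norm_normalize hν0)
    (by simp [NormedSpace.normalize, inner_smul_left, inner_smul_right, real_inner_comm ν ω,
      hω ν hν])
  refine (angularMoment_lt_top_of_mem_quadraticGrowthDirections hb_meas hb_nonneg hφ hint hφG
    (B := B) (fun r ↦ ?_) ?_).ne (hmom _ (B.orthonormal.ne_zero 0))
  · rw [hB0, NormedSpace.normalize, smul_smul]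
    exact hflat _
  · rw [hB1]
    exact Submodule.smul_mem _ _ hν

lemma exists_forall_norm_lt_le_of_eventually_le {E : Type*} [NormedAddCommGroup E] [ProperSpace E]
    {f g : E → ℝ} (hf : Continuous f) (hg : Continuous g) (hfg : ∀ᶠ ζ in 𝓝 0, f ζ ≤ g ζ)
    {x : E} (hx : g x < f x) :
    ∃ ξ ≠ 0, g ξ ≤ f ξ ∧ ∀ ζ, ‖ζ‖ < ‖ξ‖ → f ζ ≤ g ζ := by
  obtain ⟨ξ, hξ, hdist⟩ := isClosed_closure.exists_infDist_eq_dist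
    (s := closure {ζ | g ζ < f ζ}) ⟨x, subset_closure hx⟩ 0
  refine ⟨ξ, ?_, closure_minimal (fun ζ hζ ↦ le_of_lt hζ) (isClosed_le hg hf) hξ, fun ζ hζ ↦ ?_⟩
  · rintro rfl
    obtain ⟨ζ, hle, hlt⟩ := ((mem_closure_iff_frequently.1 hξ).and_eventually hfg).exists
    exact hlt.not_gt hle
  · by_contra! hlt
    have hle := infDist_le_dist_of_mem (x := 0) (subset_closure (s := {ζ | g ζ < f ζ}) hlt)
    rw [hdist, dist_zero_left, dist_zero_left] at hle
    exact hζ.not_ge hle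

lemma one_sub_mul_le_inv_one_add_pow {δ x : ℝ} (hδ : 0 ≤ δ) (hx : 0 ≤ x) (k : ℕ) :
    1 - k * δ * x ≤ ((1 + δ * x) ^ k)⁻¹ :=
  calc 1 - k * δ * x ≤ exp (-(k * (δ * x))) := by linarith [one_sub_le_exp_neg (k * (δ * x))]
    _ = (exp (δ * x) ^ k)⁻¹ := by rw [exp_neg, exp_nat_mul]
    _ ≤ ((1 + δ * x) ^ k)⁻¹ := by
        gcongr
        linarith [add_one_le_exp (δ * x)]

lemma IsCharFn.continuous (hφ : IsCharFn φ) : Continuous φ := by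
  obtain ⟨Ψ, _, rfl⟩ := hφ
  simp only [funext (charFn_eq_charFun_neg Ψ)]
  fun_prop

lemma one_add_mul_one_add_mul_eq {X : ℝ} (hX : 0 < X) (p : ℝ) :
    (1 + X * ((1 + p) / 2)) * (1 + X * ((1 - p) / 2)) =
      (1 + X) * (1 + X ^ 2 / (4 * (1 + X)) * (1 - p ^ 2)) := by
  field_simp
  ring

lemma exists_one_sub_sq_le_mul_sub {k : ℕ} (hk : 0 < k) {X : ℝ} (hX : 0 < X) :
    ∃ C ≥ 0, ∀ n ∈ Icc (0 : ℝ) 1, ∀ P ≥ (0 : ℝ), ∀ p ∈ Icc (-1 : ℝ) 1, ((1 + X) ^ k)⁻¹ ≤ n ^ 2 →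
      P ^ 2 ≤ (((1 + X * ((1 + p) / 2)) * (1 + X * ((1 - p) / 2))) ^ k)⁻¹ →
      1 - p ^ 2 ≤ C * (n - P) := by
  set a := X ^ 2 / (4 * (1 + X))
  have ha : 0 < a := by positivity
  refine ⟨2 * (1 + X) ^ k * (1 + a) / a, by positivity, fun n hn P hP p hp hnX hPX ↦ ?_⟩
  have hp0 : 0 ≤ 1 - p ^ 2 := by nlinarith [hp.1, hp.2]
  have hPn : P ^ 2 * (1 + a * (1 - p ^ 2)) ≤ n ^ 2 := by
    rw [one_add_mul_one_add_mul_eq hX, mul_pow, mul_inv] at hPX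
    rw [← le_div_iff₀ (by positivity)]
    calc P ^ 2 ≤ ((1 + X) ^ k)⁻¹ * ((1 + a * (1 - p ^ 2)) ^ k)⁻¹ := hPX
      _ ≤ n ^ 2 * (1 + a * (1 - p ^ 2))⁻¹ := by
          gcongr
          exact le_self_pow₀ (le_add_of_nonneg_right (by positivity)) hk.ne'
  have hgap : n ^ 2 * (a * (1 - p ^ 2)) ≤ (1 + a) * (2 * (n - P)) := by
    have hle : P ≤ n := le_of_sq_le_sq ((le_mul_of_one_le_right (sq_nonneg P)
      (le_add_of_nonneg_right (by positivity))).trans hPn) hn.1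
    calc n ^ 2 * (a * (1 - p ^ 2)) ≤ (1 + a * (1 - p ^ 2)) * ((n + P) * (n - P)) := by linarith
      _ ≤ (1 + a) * (2 * (n - P)) := by
          have hn1 := hn.2
          gcongr <;> nlinarith [sq_nonneg p]
  rw [div_mul_eq_mul_div, le_div_iff₀ ha]
  calc (1 - p ^ 2) * a = (1 + X) ^ k * (((1 + X) ^ k)⁻¹ * (a * (1 - p ^ 2))) := by
        rw [mul_inv_cancel_left₀ (by positivity), mul_comm]
    _ ≤ (1 + X) ^ k * ((1 + a) * (2 * (n - P))) := mul_le_mul_of_nonneg_left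
        ((mul_le_mul_of_nonneg_right hnX (by positivity)).trans hgap) (by positivity)
    _ = 2 * (1 + X) ^ k * (1 + a) * (n - P) := by ring

lemma angularMoment_lt_top_of_forall_norm_lt (hb_nonneg : ∀ x, 0 ≤ b x) (hφ : IsCharFn φ)
    (hint : HasIntegrableCollisions b φ) {k : ℕ} (hk : 0 < k) {δ : ℝ} (hδ : 0 < δ) {ξ : E3}
    (hξ : ξ ≠ 0) (hviol : ((1 + δ * ‖ξ‖ ^ 2) ^ k)⁻¹ ≤ ‖φ ξ‖ ^ 2)
    (hbelow : ∀ ζ, ‖ζ‖ < ‖ξ‖ → ‖φ ζ‖ ^ 2 ≤ ((1 + δ * ‖ζ‖ ^ 2) ^ k)⁻¹) :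
    angularMoment b ξ < ⊤ := by
  obtain ⟨C, hC, hbound⟩ := exists_one_sub_sq_le_mul_sub hk
    (mul_pos hδ (pow_pos (norm_pos_iff.2 hξ) 2) : 0 < δ * ‖ξ‖ ^ 2)
  refine hint.lintegral_ofReal_mul_lt_top hb_nonneg (C := C) fun σ ↦ ?_
  rcases (one_sub_devCos_sq_nonneg ξ σ).eq_or_lt with hflat | hgraze
  · rw [← hflat]
    positivity
  have hdev := abs_lt.1 ((sq_lt_one_iff_abs_lt_one _).1 (sub_pos.1 hgraze))
  have hsq : 0 < ‖ξ‖ ^ 2 := by positivity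
  have hplus := hbelow (xiPlus ξ σ) <| lt_of_pow_lt_pow_left₀ 2 (norm_nonneg ξ) <| by
    rw [norm_xiPlus_sq]
    nlinarith
  have hminus := hbelow (xiMinus ξ σ) <| lt_of_pow_lt_pow_left₀ 2 (norm_nonneg ξ) <| by
    rw [norm_xiMinus_sq]
    nlinarith
  rw [norm_xiPlus_sq, ← mul_assoc] at hplus
  rw [norm_xiMinus_sq, ← mul_assoc] at hminus
  refine (hbound ‖φ ξ‖ ⟨norm_nonneg _, hφ.norm_le_one ξ⟩ _ (norm_nonneg
    (φ (xiPlus ξ σ) * φ (xiMinus ξ σ))) _ (abs_le.1 (abs_devCos_le_one ξ σ)) hviol ?_).trans ?_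
  · rw [norm_mul, mul_pow, mul_pow, mul_inv]
    exact mul_le_mul hplus hminus (sq_nonneg _) ((sq_nonneg _).trans hplus)
  · rw [collisionDefect, norm_sub_rev]
    gcongr
    exact norm_sub_norm_le _ _

lemma isBigO_norm_sq_one_sub_norm_sq (hb_meas : Measurable b)
    (hb_nonneg : ∀ x, 0 ≤ b x) (hφ : IsCharFn φ) (hint : HasIntegrableCollisions b φ)
    {η : E3} (hη : ‖φ η‖ ≠ 1) (hmom : ∀ ξ ≠ 0, angularMoment b ξ = ⊤) :
    (fun ζ : E3 ↦ ‖ζ‖ ^ 2) =O[𝓝 0] fun ζ ↦ 1 - ‖φ ζ‖ ^ 2 := by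
  obtain ⟨G, _, hφG⟩ := hφ.exists_eq_levyExponent
  simp only [hφG]
  exact isBigO_norm_sq_levyExponent
    (quadraticGrowthDirections_eq_top hb_meas hb_nonneg hφ hint hφG hη hmom)

lemma hasFourierDecay_of_angularMoment_eq_top (hb_meas : Measurable b)
    (hb_nonneg : ∀ x, 0 ≤ b x) (hφ : IsCharFn φ) (hint : HasIntegrableCollisions b φ)
    {η : E3} (hη : ‖φ η‖ ≠ 1) (hmom : ∀ ξ ≠ 0, angularMoment b ξ = ⊤) {k : ℕ} (hk : 0 < k) :
    HasFourierDecay k φ := by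
  obtain ⟨C, hC, hbound⟩ :=
    (isBigO_norm_sq_one_sub_norm_sq hb_meas hb_nonneg hφ hint hη hmom).exists_pos
  have hk' : (0 : ℝ) < k := Nat.cast_pos.2 hk
  have hnear : ∀ᶠ ζ in 𝓝 0, ‖φ ζ‖ ^ 2 ≤ ((1 + (C * k)⁻¹ * ‖ζ‖ ^ 2) ^ k)⁻¹ := by
    filter_upwards [hbound.bound] with ζ hζ
    rw [norm_of_nonneg (sq_nonneg _), norm_of_nonneg
      (sub_nonneg.2 (pow_le_one₀ (norm_nonneg _) (hφ.norm_le_one _))), ← div_le_iff₀' hC] at hζ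
    calc ‖φ ζ‖ ^ 2 ≤ 1 - k * (C * k)⁻¹ * ‖ζ‖ ^ 2 := by
          rw [mul_inv, mul_left_comm, mul_inv_cancel₀ hk'.ne', mul_one, inv_mul_eq_div]
          linarith
      _ ≤ _ := one_sub_mul_le_inv_one_add_pow (by positivity) (by positivity) k
  refine ⟨(C * k)⁻¹, by positivity, fun x ↦ le_of_not_gt fun hx ↦ ?_⟩
  obtain ⟨ξ, hξ, hviol, hbelow⟩ := exists_forall_norm_lt_le_of_eventually_le
    (hφ.continuous.norm.pow 2) (by fun_prop (disch := intros; positivity)) hnear hx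
  exact (angularMoment_lt_top_of_forall_norm_lt hb_nonneg hφ hint hk (by positivity) hξ hviol
    hbelow).ne (hmom ξ hξ)

end InfiniteMoment

section Smoothing

lemma lintegral_one_add_norm_sq_pow_mul_lt_top {E : Type*} [NormedAddCommGroup E]
    [NormedSpace ℝ E] [FiniteDimensional ℝ E] [MeasurableSpace E] [BorelSpace E] {μ : Measure E}
    [μ.IsAddHaarMeasure] {f : E → ℝ} {N m : ℕ} (hm : Module.finrank ℝ E < 2 * m) {δ : ℝ}
    (hδ : 0 < δ) (hf : ∀ x, f x ≤ ((1 + δ * ‖x‖ ^ 2) ^ (N + m))⁻¹) :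
    ∫⁻ x, ENNReal.ofReal ((1 + ‖x‖ ^ 2) ^ N * f x) ∂μ < ⊤ := by
  have hint : Integrable (fun x : E ↦ ((1 + ‖x‖ ^ 2) ^ m)⁻¹) μ := by
    convert integrable_rpow_neg_one_add_norm_sq (E := E) (μ := μ) (r := 2 * m)
      (by exact_mod_cast hm) using 2 with x
    rw [neg_div, mul_div_cancel_left₀ _ two_ne_zero, rpow_neg (by positivity), rpow_natCast]
  set a := min 1 δ
  have ha : 0 < a := lt_min one_pos hδ
  refine (lintegral_mono fun x ↦ ENNReal.ofReal_le_ofReal ?_).trans_lt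
    (hint.const_mul (a ^ (N + m))⁻¹).lintegral_lt_top
  have hscale : a * (1 + ‖x‖ ^ 2) ≤ 1 + δ * ‖x‖ ^ 2 := by
    rw [mul_add, mul_one]
    gcongr
    · exact min_le_left 1 δ
    · exact min_le_right 1 δ
  calc (1 + ‖x‖ ^ 2) ^ N * f x ≤ (1 + ‖x‖ ^ 2) ^ N * ((a * (1 + ‖x‖ ^ 2)) ^ (N + m))⁻¹ := by
        gcongr
        exact (hf x).trans (by gcongr)
    _ = (a ^ (N + m))⁻¹ * ((1 + ‖x‖ ^ 2) ^ m)⁻¹ := by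
        rw [mul_pow, pow_add (1 + ‖x‖ ^ 2)]
        field_simp

variable {b : ℝ → ℝ} {ψ : ℝ → E3 → ℂ} {ψ₀ : E3 → ℂ}

lemma IsBobylevSolution.hasFourierDecay (hψ : IsBobylevSolution b ψ ψ₀) (hb_meas : Measurable b)
    (hb_nonneg : ∀ x, 0 ≤ b x) {t κ s : ℝ} (hs : s ∈ Ioc 0 2) (ht : 0 < t) (hκ : 0 < κ)
    (hcoer : ∀ τ ∈ Icc 0 t, IsCollisionCoercive b κ s (ψ τ)) {η : E3} (hη : ‖ψ t η‖ ≠ 1)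
    {k : ℕ} (hk : 0 < k) : HasFourierDecay k (ψ t) := by
  by_cases hmom : ∀ ξ ≠ 0, angularMoment b ξ = ⊤
  · exact hasFourierDecay_of_angularMoment_eq_top hb_meas hb_nonneg (hψ.isCharFn t ht.le)
      (hψ.integrable t ht.le) hη hmom hk
  · push Not at hmom
    obtain ⟨ξ, hξ, hmom⟩ := hmom
    exact hψ.hasFourierDecay_of_angularMoment_lt_top hb_meas hb_nonneg hs ht hκ hcoer hξ hmom.lt_top
      hk

lemma IsBobylevSolution.exists_forall_le_one_sub_norm_sq (hψ : IsBobylevSolution b ψ ψ₀) {η : E3}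
    {μ : ℝ} (hμ : μ < 1 - ‖ψ₀ η‖ ^ 2) : ∃ T > 0, ∀ τ ∈ Icc 0 T, μ ≤ 1 - ‖ψ τ η‖ ^ 2 := by
  have hcont : ContinuousWithinAt (fun τ ↦ 1 - ‖ψ τ η‖ ^ 2) (Ici 0) 0 :=
    continuousWithinAt_const.sub ((hψ.eq 0 le_rfl η).continuousWithinAt.norm.pow 2)
  obtain ⟨T, hT, hball⟩ := mem_nhdsGE_iff_exists_Icc_subset.1
    (hcont.eventually_const_lt (by simpa only [hψ.init] using hμ))
  exact ⟨T, hT, fun τ hτ ↦ (hball hτ).le⟩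

lemma eventually_le_mul_rpow_of_le {b : ℝ → ℝ} (hb : ∀ x, 0 ≤ b x) {c s s' : ℝ} (hss : s' ≤ s)
    (h : ∀ᶠ θ in 𝓝[>] 0, c ≤ b (cos θ) * θ ^ (2 + 2 * s)) :
    ∀ᶠ θ in 𝓝[>] 0, c ≤ b (cos θ) * θ ^ (2 + 2 * s') := by
  filter_upwards [h, Ioc_mem_nhdsGT one_pos] with θ hθ hθ1
  exact hθ.trans (mul_le_mul_of_nonneg_left
    (rpow_le_rpow_of_exponent_ge hθ1.1 hθ1.2 (by linarith)) (hb _))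

end Smoothing

theorem villani_smoothing_local_general {s c : ℝ} (hs : 0 < s) (hc : 0 < c) {b : ℝ → ℝ}
    (hb_meas : Measurable b) (hb_nonneg : ∀ x, 0 ≤ b x)
    (hb_sing : ∀ᶠ θ in 𝓝[>] 0, c ≤ b (cos θ) * θ ^ (2 + 2 * s))
    {F₀ : Measure E3} [IsProbabilityMeasure F₀] (hnotdirac : ∀ v₀ : E3, F₀ {v₀} ≠ 1)
    {ψ : ℝ → E3 → ℂ} (hψ : IsBobylevSolution b ψ (charFn F₀)) :
    ∃ T > 0, ∀ t ∈ Ioc 0 T, ∀ N : ℕ,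
      ∫⁻ ξ : E3, ENNReal.ofReal ((1 + ‖ξ‖ ^ 2) ^ N * ‖ψ t ξ‖ ^ 2) < ⊤ := by
  obtain ⟨η, hη⟩ := exists_norm_charFun_ne_one hnotdirac
  obtain ⟨μ, hμ, hμη⟩ : ∃ μ, 0 < μ ∧ μ < 1 - ‖charFn F₀ (-η)‖ ^ 2 := by
    refine exists_between (sub_pos.2 (pow_lt_one₀ (norm_nonneg _) ?_ two_ne_zero))
    rw [charFn_eq_charFun_neg, neg_neg]
    exact norm_charFun_le_one η |>.lt_of_ne hη
  obtain ⟨T, hT, hdefect⟩ := hψ.exists_forall_le_one_sub_norm_sq hμη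
  have hs' : min s 1 ∈ Ioc 0 2 := ⟨lt_min hs one_pos, (min_le_right _ _).trans one_le_two⟩
  obtain ⟨κ, hκ, hcoer⟩ := exists_isCollisionCoercive hb_meas hb_nonneg hs' hc
    (eventually_le_mul_rpow_of_le hb_nonneg (min_le_left s 1) hb_sing) (-η) hμ
  refine ⟨T, hT, fun t ht N ↦ ?_⟩
  have hne : ‖ψ t (-η)‖ ≠ 1 := fun h ↦ by
    simpa [h, hμ.not_ge] using hdefect t (Ioc_subset_Icc_self ht)
  obtain ⟨δ, hδ, hdecay⟩ := hψ.hasFourierDecay hb_meas hb_nonneg hs' ht.1 hκ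
    (fun τ hτ ↦ hcoer _ (hψ.isCharFn τ hτ.1) (hdefect τ ⟨hτ.1, hτ.2.trans ht.2⟩)) hne
    (Nat.succ_pos (N + 1))
  exact lintegral_one_add_norm_sq_pow_mul_lt_top (m := 2) (by simp) hδ hdecay

/-- Villani conjecture, local-in-time H^∞ smoothing for measure
initial data in `𝒦^α` which are not a single Dirac mass. -/
theorem villani_smoothing_local
    (s K : ℝ) (hs0 : 0 < s) (hs1 : s < 1) (hK : 0 < K)
    (b : ℝ → ℝ) (hb_meas : Measurable b) (hb_nonneg : ∀ x, 0 ≤ b x)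
    (hb_sing : KernelSingular b s K)
    (α : ℝ) (hα : 2 * s < α) (hα2 : α ≤ 2)
    (F₀ : Measure E3) [IsProbabilityMeasure F₀]
    (hnotdirac : ∀ v₀ : E3, F₀ {v₀} ≠ 1)
    (ψ₀ : E3 → ℂ) (hψ₀ : ψ₀ = charFn F₀) (hψ₀K : KBdd α ψ₀)
    (ψ : ℝ → E3 → ℂ) (hψ : IsBobylevSolution b ψ ψ₀)
    (hψK : ∀ t ≥ 0, KBdd α (ψ t)) (hψcont : KContinuous α ψ) :
    ∃ T > 0, ∀ t ∈ Set.Ioc (0:ℝ) T, ∀ N : ℕ,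
      (∫⁻ ξ : E3, ENNReal.ofReal ((1 + ‖ξ‖ ^ 2) ^ N * ‖ψ t ξ‖ ^ 2)) < ⊤ := by
  subst hψ₀
  exact villani_smoothing_local_general hs0 (half_pos hK) hb_meas hb_nonneg
    (hb_sing.eventually_const_le (half_lt_self hK)) hnotdirac hψ
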